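/- Let k be a field, let c ≥ 1 and a ≥ 2 be integers, and let q ∈ k be a nonzero element with q^a = 1. Let A be the quantum complete intersection k⟨x_1, …, x_c⟩/(x_i^a for all i, x_i x_j − q x_j x_i for all i < j), i.e. the quotient of the free (tensor) algebra on c generators by the two-sided ideal generated by the elements x_i^a (1 ≤ i ≤ c) and x_i x_j − q x_j x_i (1 ≤ i < j ≤ c). Then, given two finitely generated left A-modules M and N, either Ext_A^n(M, N) = 0 for all n > 0, or there exists a non-negative integer m_0 such that Ext_A^n(M, N) ≠ 0 for all even integers n ≥ m_0, or Ext_A^n(M, N) ≠ 0 for all odd integers n ≥ m_0. -/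

import Mathlib

open CategoryTheory

/-- The defining relations of the quantum complete intersection
`k⟨x 1, …, x c⟩/(x i ^ a, x i * x j - q • x j * x i for i < j)`. -/
inductive QCIRel (k : Type) [Field k] (c a : ℕ) (q : k) :
    FreeAlgebra k (Fin c) → FreeAlgebra k (Fin c) → Prop
  | pow (i : Fin c) : QCIRel k c a q (FreeAlgebra.ι k i ^ a) 0
  | comm (i j : Fin c) (hij : i < j) :
      QCIRel k c a q
        (FreeAlgebra.ι k i * FreeAlgebra.ι k j - q • (FreeAlgebra.ι k j * FreeAlgebra.ι k i)) 0

/-- The quantum complete intersection `A_{c,q}^a`: the quotient of the free algebra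
`k⟨x 1, …, x c⟩` by the two-sided ideal generated by the elements `x i ^ a` (`1 ≤ i ≤ c`)
and `x i * x j − q • x j * x i` (`i < j`). -/
abbrev QCI (k : Type) [Field k] (c a : ℕ) (q : k) : Type := RingQuot (QCIRel k c a q)

/-!
Let `A` be a quantum complete intersection with generators `x i`. On `V = Hom_k(M, N)` each `x i`
acts from the left by `L i` and from the right by `R i`. As `L i ^ a = R i ^ a = 0`, the operators
`L i - R i` and `∑ u < a, L i ^ u * R i ^ (a - 1 - u)` annihilate each other. Once twisted by powers
of the commutation parameters, they make up a differential on `k[y i] ⊗ Λ[e i] ⊗ V`, with `y i` in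
degree `2` and `e i` in degree `1`: the parts belonging to different generators anticommute because
the parameters are `a`-th roots of unity. The cohomology of this complex is `Ext_A(M, N)`.

The differential is linear over the Noetherian ring `k[y i]` and `V` is finite-dimensional, so in
large degrees `Ext^n = 0` implies `Ext^(n + 2) = 0`. If `Ext` vanishes in some large even degree and
in some large odd degree, then it vanishes in all large degrees. The `y i` form a regular sequence
with bounded quotient, which brings the vanishing down to all degrees above the number of
generators. Finally, `M` embeds into modules with vanishing higher `Ext`, so that the bound can be
lowered to `0` by dimension shifting.
-/

namespace QuantumCI

open scoped symmDiff

section Anticommute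

variable {E : Type*} [Ring E] {x x' y y' : E}

/-- The relation `x * y = -(y * x)`, used to see that a sum of differentials is a differential. -/
def Anticommute (x y : E) : Prop := x * y = -(y * x)

namespace Anticommute

lemma symm (h : Anticommute x y) : Anticommute y x := by
  rw [Anticommute, h, neg_neg]

lemma add_left (h : Anticommute x y) (h' : Anticommute x' y) : Anticommute (x + x') y := by
  rw [Anticommute, add_mul, mul_add, h, h', neg_add]

lemma sub_left (h : Anticommute x y) (h' : Anticommute x' y) : Anticommute (x - x') y := by
  rw [Anticommute, sub_mul, mul_sub, h, h', neg_sub_neg, neg_sub]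

lemma sum_left {ι : Type*} {s : Finset ι} {f : ι → E} (h : ∀ i ∈ s, Anticommute (f i) y) :
    Anticommute (∑ i ∈ s, f i) y := by
  rw [Anticommute, Finset.sum_mul, Finset.mul_sum, ← Finset.sum_neg_distrib]
  exact Finset.sum_congr rfl h

lemma add_right (h : Anticommute x y) (h' : Anticommute x y') : Anticommute x (y + y') :=
  (h.symm.add_left h'.symm).symm

lemma sub_right (h : Anticommute x y) (h' : Anticommute x y') : Anticommute x (y - y') :=
  (h.symm.sub_left h'.symm).symm

lemma sum_right {ι : Type*} {s : Finset ι} {f : ι → E} (h : ∀ i ∈ s, Anticommute x (f i)) :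
    Anticommute x (∑ i ∈ s, f i) :=
  (sum_left fun i hi => (h i hi).symm).symm

lemma mul_left (h : Anticommute x y) (hx' : Commute x' y) : Anticommute (x' * x) y := by
  rw [Anticommute, mul_assoc, h, mul_neg, ← mul_assoc, hx'.eq, mul_assoc]

lemma mul_right (h : Anticommute x y) (hy' : Commute x y') : Anticommute x (y' * y) :=
  (h.symm.mul_left hy'.symm).symm

lemma map {F : Type*} [Ring F] (h : Anticommute x y) (f : E →+* F) : Anticommute (f x) (f y) := by
  rw [Anticommute, ← map_mul, h, map_neg, map_mul]

lemma sum_mul_self {ι : Type*} {D : ι → E} (h : ∀ i j, i ≠ j → Anticommute (D i) (D j))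
    (h0 : ∀ i, D i * D i = 0) (s : Finset ι) : (∑ i ∈ s, D i) * (∑ i ∈ s, D i) = 0 := by
  classical
  induction s using Finset.induction_on with
  | empty => simp
  | insert i s hi ih =>
    have hanti : Anticommute (D i) (∑ j ∈ s, D j) :=
      sum_right fun j hj => h i j (by rintro rfl; exact hi hj)
    rw [Finset.sum_insert hi, add_mul, mul_add, mul_add, ih, h0, hanti]
    abel

end Anticommute

end Anticommute

section Families

variable {ι k E F : Type*}

/-- A multiplicatively antisymmetric matrix of `a`-th roots of unity: the commutation
parameters of a quantum complete intersection. -/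
structure IsRootMatrix [CommSemiring k] (a : ℕ) (Q : ι → ι → k) : Prop where
  mul_swap : ∀ i j, Q i j * Q j i = 1
  pow_eq_one : ∀ i j, Q i j ^ a = 1

variable [CommRing k] [Ring E] [Algebra k E] [Ring F] [Algebra k F]

/-- A family satisfying the defining relations of the quantum complete intersection with
exponent `a` and commutation matrix `Q`. -/
structure IsQuantumFamily (a : ℕ) (Q : ι → ι → k) (x : ι → E) : Prop where
  comm : ∀ i j, i ≠ j → x i * x j = Q i j • (x j * x i)
  pow_eq_zero : ∀ i, x i ^ a = 0

/-- The two commuting families of operators by which the generators act on a bimodule; the right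
action is written as a left action of the opposite algebra, which transposes `Q`. -/
structure IsQuantumBimodule (a : ℕ) (Q : ι → ι → k) (L R : ι → E) : Prop where
  left : IsQuantumFamily a Q L
  right : IsQuantumFamily a (fun i j => Q j i) R
  commute : ∀ i j, Commute (L i) (R j)

lemma mul_pow_of_mul_eq_smul {A B : E} {q : k} (h : A * B = q • (B * A)) (n : ℕ) :
    A * B ^ n = q ^ n • (B ^ n * A) := by
  induction n with
  | zero => simp
  | succ n ih =>
    rw [pow_succ, ← mul_assoc, ih, smul_mul_assoc, mul_assoc, h, mul_smul_comm, smul_smul,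
      ← pow_succ, mul_assoc]

variable {a : ℕ} {Q : ι → ι → k} {L R x : ι → E}

lemma IsQuantumFamily.map (hx : IsQuantumFamily a Q x) (f : E →ₐ[k] F) :
    IsQuantumFamily a Q (fun i => f (x i)) where
  comm i j hij := by rw [← map_mul, hx.comm i j hij, map_smul, map_mul]
  pow_eq_zero i := by rw [← map_pow, hx.pow_eq_zero, map_zero]

lemma IsQuantumBimodule.commute_smul (h : IsQuantumBimodule a Q L R) (i : ι) (r s : k) :
    Commute (r • L i) (s • R i) :=
  ((h.commute i i).smul_left _).smul_right _

end Families

section RootMatrix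

variable {ι k : Type*} [Field k] {a : ℕ} {Q : ι → ι → k}

lemma IsRootMatrix.ne_zero (hQ : IsRootMatrix a Q) (i j : ι) : Q i j ≠ 0 :=
  left_ne_zero_of_mul_eq_one (hQ.mul_swap i j)

lemma IsRootMatrix.swap_eq_inv (hQ : IsRootMatrix a Q) (i j : ι) : Q j i = (Q i j)⁻¹ :=
  eq_inv_of_mul_eq_one_right (hQ.mul_swap i j)

lemma IsRootMatrix.zpow_eq_zpow (hQ : IsRootMatrix a Q) (i j : ι) {m n : ℤ}
    (h : (a : ℤ) ∣ m - n) : Q i j ^ m = Q i j ^ n := by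
  obtain ⟨t, ht⟩ := h
  rw [← sub_add_cancel m n, zpow_add₀ (hQ.ne_zero i j), ht, zpow_mul, zpow_natCast,
    hQ.pow_eq_one, one_zpow, one_mul]

end RootMatrix

section Toggle

variable {ι k V : Type*} [DecidableEq ι]

lemma mem_singleton_symmDiff_self (i : ι) (p : Finset ι) : i ∈ {i} ∆ p ↔ i ∉ p := by
  simp [Finset.mem_symmDiff]

lemma mem_singleton_symmDiff_of_ne {i j : ι} (h : j ≠ i) (p : Finset ι) :
    j ∈ {i} ∆ p ↔ j ∈ p := by
  simp [Finset.mem_symmDiff, h]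

lemma singleton_symmDiff_of_mem {i : ι} {p : Finset ι} (h : i ∈ p) : {i} ∆ p = p.erase i := by
  ext j
  by_cases hj : j = i
  · simp [hj, mem_singleton_symmDiff_self, h]
  · simp [hj, mem_singleton_symmDiff_of_ne]

lemma singleton_symmDiff_of_notMem {i : ι} {p : Finset ι} (h : i ∉ p) :
    {i} ∆ p = insert i p := by
  ext j
  by_cases hj : j = i
  · simp [hj, mem_singleton_symmDiff_self, h]
  · simp [hj, mem_singleton_symmDiff_of_ne]

/-- The change in cardinality effected by adding (`up = true`) or removing an element. -/
def toggleSign (up : Bool) : ℤ := if up then 1 else -1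

variable [Field k] [AddCommGroup V] [Module k V]

/-- The operator on `V`-valued functions of subsets adding (`up = true`) or removing `i`, twisted
by the weight `∏ j ∈ p, g j` and by `T` on values: for `up = true` and trivial twist it is the
exterior multiplication by `i`, for `up = false` the contraction. -/
def toggle (up : Bool) (i : ι) (g : ι → k) (T : Module.End k V) :
    Module.End k (Finset ι → V) :=
  LinearMap.pi fun p => if i ∈ p ↔ up = true then
    (∏ j ∈ p, g j) • T ∘ₗ LinearMap.proj ({i} ∆ p) else 0

variable {i j : ι} {up up' : Bool} {p : Finset ι} {g h : ι → k} {T T' : Module.End k V}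

lemma toggle_apply (φ : Finset ι → V) :
    toggle up i g T φ p =
      if i ∈ p ↔ up = true then (∏ j ∈ p, g j) • T (φ ({i} ∆ p)) else 0 := by
  simp only [toggle, LinearMap.pi_apply]
  split_ifs <;> rfl

lemma prod_singleton_symmDiff (hp : i ∈ p ↔ up = true) (hg : g i ≠ 0) :
    ∏ j ∈ {i} ∆ p, g j = g i ^ (-(toggleSign up)) * ∏ j ∈ p, g j := by
  cases up
  · have hi : i ∉ p := by simpa using hp
    simp [toggleSign, singleton_symmDiff_of_notMem hi, Finset.prod_insert hi]
  · have hi : i ∈ p := by simpa using hp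
    simp [toggleSign, singleton_symmDiff_of_mem hi, ← Finset.mul_prod_erase p g hi, hg]

lemma toggle_mul_toggle_self : toggle up i g T * toggle up i h T' = 0 := by
  ext φ : 1
  funext p
  simp only [Module.End.mul_apply, toggle_apply, mem_singleton_symmDiff_self,
    LinearMap.zero_apply, Pi.zero_apply]
  cases up <;> by_cases hp : i ∈ p <;> simp [hp]

lemma toggle_anticommute (hij : i ≠ j) (hg : g j ≠ 0) (hh : h i ≠ 0)
    (H : h i ^ (-(toggleSign up)) • (T * T') = -(g j ^ (-(toggleSign up')) • (T' * T))) :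
    Anticommute (toggle up i g T) (toggle up' j h T') := by
  refine LinearMap.ext fun φ => funext fun p => ?_
  simp only [Module.End.mul_apply, LinearMap.neg_apply, Pi.neg_apply, toggle_apply,
    mem_singleton_symmDiff_of_ne hij, mem_singleton_symmDiff_of_ne hij.symm]
  by_cases hi : i ∈ p ↔ up = true <;> by_cases hj : j ∈ p ↔ up' = true <;>
    simp only [hi, hj, if_true, if_false, map_zero, smul_zero, neg_zero]
  rw [prod_singleton_symmDiff hi hh, prod_singleton_symmDiff hj hg,
    symmDiff_left_comm {j} {i} p]
  have hφ := LinearMap.congr_fun H (φ ({i} ∆ ({j} ∆ p)))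
  simp only [LinearMap.smul_apply, Module.End.mul_apply, LinearMap.neg_apply] at hφ
  simp only [map_smul]
  rw [mul_comm (h i ^ _), mul_smul, hφ, smul_neg, smul_neg, smul_smul, smul_smul, smul_smul]
  congr 2
  ring

variable {W : Type*} [AddCommGroup W] [Module k W]

lemma toggle_comp_apply {f : V →ₗ[k] W} {S : Module.End k W} (hf : ∀ v, f (T v) = S (f v))
    (φ : Finset ι → V) : f ∘ toggle up i g T φ = toggle up i g S (f ∘ φ) := by
  funext p
  simp only [Function.comp_apply, toggle_apply]
  split_ifs <;> simp [hf]

end Toggle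

section Weight

variable {ι k E : Type*} [Field k] [Ring E] [Algebra k E]

/-- The operator `T` moves past the actions of the generators other than `i` in the same way as
`L i ^ u * R i ^ v`; the exponents may be negative. -/
structure HasWeight (Q : ι → ι → k) (L R : ι → E) (i : ι) (u v : ℤ) (T : E) : Prop where
  mul_left : ∀ j, j ≠ i → T * L j = Q i j ^ u • (L j * T)
  mul_right : ∀ j, j ≠ i → T * R j = Q j i ^ v • (R j * T)

variable {a : ℕ} {Q : ι → ι → k} {L R : ι → E} {i j : ι} {u v u' v' : ℤ} {T T' : E}

namespace HasWeight

lemma one : HasWeight Q L R i 0 0 1 where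
  mul_left := by simp
  mul_right := by simp

lemma mul (hQ : IsRootMatrix a Q) (h : HasWeight Q L R i u v T)
    (h' : HasWeight Q L R i u' v' T') : HasWeight Q L R i (u + u') (v + v') (T * T') where
  mul_left j hj := by
    rw [mul_assoc, h'.mul_left j hj, mul_smul_comm, ← mul_assoc, h.mul_left j hj, smul_mul_assoc,
      smul_smul, ← zpow_add₀ (hQ.ne_zero i j), add_comm u', mul_assoc]
  mul_right j hj := by
    rw [mul_assoc, h'.mul_right j hj, mul_smul_comm, ← mul_assoc, h.mul_right j hj, smul_mul_assoc,
      smul_smul, ← zpow_add₀ (hQ.ne_zero j i), add_comm v', mul_assoc]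

lemma pow (hQ : IsRootMatrix a Q) (h : HasWeight Q L R i u v T) (n : ℕ) :
    HasWeight Q L R i (n * u) (n * v) (T ^ n) := by
  induction n with
  | zero => simpa using one
  | succ n ih => simpa [pow_succ, add_mul] using ih.mul hQ h

lemma mul_monomial (h : HasWeight Q L R i u v T) (hij : i ≠ j) (m n : ℕ) :
    T * (L j ^ m * R j ^ n) =
      (Q i j ^ (u * m) * Q j i ^ (v * n)) • (L j ^ m * R j ^ n * T) := by
  rw [← mul_assoc, mul_pow_of_mul_eq_smul (h.mul_left j hij.symm), smul_mul_assoc, mul_assoc,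
    mul_pow_of_mul_eq_smul (h.mul_right j hij.symm), mul_smul_comm, smul_smul, mul_assoc,
    zpow_mul, zpow_mul, zpow_natCast, zpow_natCast]

end HasWeight

namespace IsQuantumBimodule

lemma hasWeight_left (h : IsQuantumBimodule a Q L R) (i : ι) : HasWeight Q L R i 1 0 (L i) where
  mul_left j hj := by rw [zpow_one, h.left.comm i j hj.symm]
  mul_right j _ := by rw [zpow_zero, one_smul, (h.commute i j).eq]

lemma hasWeight_right (h : IsQuantumBimodule a Q L R) (i : ι) : HasWeight Q L R i 0 1 (R i) where
  mul_left j _ := by rw [zpow_zero, one_smul, (h.commute j i).eq]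
  mul_right j hj := by rw [zpow_one, h.right.comm i j hj.symm]

lemma hasWeight_monomial (hQ : IsRootMatrix a Q) (h : IsQuantumBimodule a Q L R) (i : ι)
    (m n : ℕ) : HasWeight Q L R i m n (L i ^ m * R i ^ n) := by
  simpa using ((h.hasWeight_left i).pow hQ m).mul hQ ((h.hasWeight_right i).pow hQ n)

end IsQuantumBimodule

end Weight

section Pieces

variable {ι k V : Type*} [LinearOrder ι] [Field k] [AddCommGroup V] [Module k V]

/-- The factor which `j ∈ p` contributes to an operator of weight `(u, v)` in position `i`: the
Koszul sign and the scalar for moving the `j`-th exterior generator past that operator. -/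
def twist (Q : ι → ι → k) (i : ι) (u v : ℤ) (j : ι) : k :=
  if j < i then -(Q j i ^ u) else if i < j then Q i j ^ v else 1

/-- The Koszul sign `(-1) ^ #{j ∈ p | j < i}`. -/
def koszulSign (k : Type*) [Field k] (i : ι) (p : Finset ι) : k :=
  ∏ j ∈ p, if j < i then -1 else 1

/-- The scalar for moving the left action of `i` past the exterior generators in `p`. -/
def leftWeight (Q : ι → ι → k) (i : ι) (p : Finset ι) : k :=
  ∏ j ∈ p, if j < i then Q j i else 1

/-- The scalar for moving the right action of `i` past the exterior generators in `p`. -/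
def rightWeight (Q : ι → ι → k) (i : ι) (p : Finset ι) : k :=
  ∏ j ∈ p, if i < j then Q i j else 1

/-- The operator `T` of weight `(u, v)` on values, combined with adding or removing `i`. -/
def twistedOp (Q : ι → ι → k) (up : Bool) (i : ι) (u v : ℤ) (T : Module.End k V) :
    Module.End k (Finset ι → V) :=
  toggle up i (twist Q i u v) T

/-- The twisted commutator with `x i`, raising the exterior degree. -/
def commutatorOp (Q : ι → ι → k) (L R : ι → Module.End k V) (i : ι) :
    Module.End k (Finset ι → V) :=
  twistedOp Q true i 1 0 (L i) - twistedOp Q true i 0 1 (R i)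

/-- The twisted norm operator `∑ u < a, L i ^ u * R i ^ (a - 1 - u)`, lowering the exterior
degree. -/
def normOp (a : ℕ) (Q : ι → ι → k) (L R : ι → Module.End k V) (i : ι) :
    Module.End k (Finset ι → V) :=
  ∑ u ∈ Finset.range a,
    twistedOp Q false i u ((a - 1 - u : ℕ) : ℤ) (L i ^ u * R i ^ (a - 1 - u))

variable {a : ℕ} {Q : ι → ι → k} {L R : ι → Module.End k V} {i j : ι} {p : Finset ι}
  {up up' : Bool} {u v u' v' : ℤ} {T T' : Module.End k V}

lemma twist_ne_zero (hQ : IsRootMatrix a Q) (i : ι) (u v : ℤ) (j : ι) : twist Q i u v j ≠ 0 := by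
  unfold twist
  split_ifs <;> simp [hQ.ne_zero, zpow_ne_zero]

lemma prod_twist (i : ι) (u v : ℤ) (p : Finset ι) :
    ∏ j ∈ p, twist Q i u v j =
      koszulSign k i p * leftWeight Q i p ^ u * rightWeight Q i p ^ v := by
  unfold koszulSign leftWeight rightWeight
  rw [← Finset.prod_zpow, ← Finset.prod_zpow, ← Finset.prod_mul_distrib,
    ← Finset.prod_mul_distrib]
  refine Finset.prod_congr rfl fun j _ => ?_
  rcases lt_trichotomy j i with h | h | h
  · simp [twist, h, h.not_gt]
  · simp [twist, h]
  · simp [twist, h, h.not_gt]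

lemma twistedOp_apply (φ : Finset ι → V) :
    twistedOp Q up i u v T φ p = if i ∈ p ↔ up = true then
      (koszulSign k i p * leftWeight Q i p ^ u * rightWeight Q i p ^ v) • T (φ ({i} ∆ p))
    else 0 := by
  rw [twistedOp, toggle_apply, prod_twist]

lemma koszulSign_mul_self (i : ι) (p : Finset ι) : koszulSign k i p * koszulSign k i p = 1 := by
  unfold koszulSign
  rw [← Finset.prod_mul_distrib]
  refine Finset.prod_eq_one fun j _ => ?_
  split_ifs <;> simp

lemma rightWeight_ne_zero (hQ : IsRootMatrix a Q) (i : ι) (p : Finset ι) :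
    rightWeight Q i p ≠ 0 := by
  refine Finset.prod_ne_zero_iff.2 fun j _ => ?_
  split_ifs <;> simp [hQ.ne_zero]

lemma prod_singleton_symmDiff_of_eq_one {g : ι → k} (hg : g i = 1) :
    ∏ j ∈ {i} ∆ p, g j = ∏ j ∈ p, g j := by
  simpa [hg] using prod_singleton_symmDiff (up := decide (i ∈ p)) (by simp)
    (hg ▸ one_ne_zero : g i ≠ 0)

lemma koszulSign_symmDiff : koszulSign k i ({i} ∆ p) = koszulSign k i p :=
  prod_singleton_symmDiff_of_eq_one (by simp)

lemma leftWeight_symmDiff : leftWeight Q i ({i} ∆ p) = leftWeight Q i p :=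
  prod_singleton_symmDiff_of_eq_one (by simp)

lemma rightWeight_symmDiff : rightWeight Q i ({i} ∆ p) = rightWeight Q i p :=
  prod_singleton_symmDiff_of_eq_one (by simp)

/-- The scalar produced by the exterior generators matches the one produced by the values exactly
when `u + v ≡ ±1` modulo the order `a` of the parameters; here `q ^ a = 1` enters. -/
lemma twistedOp_anticommute_of_lt (hQ : IsRootMatrix a Q) (hij : i < j)
    (hw : (a : ℤ) ∣ u + v - toggleSign up) (hw' : (a : ℤ) ∣ u' + v' - toggleSign up')
    (hT : T * T' = (Q i j ^ (u * u') * Q j i ^ (v * v')) • (T' * T)) :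
    Anticommute (twistedOp Q up i u v T) (twistedOp Q up' j u' v' T') := by
  refine toggle_anticommute hij.ne (twist_ne_zero hQ _ _ _ _) (twist_ne_zero hQ _ _ _ _) ?_
  have hne := hQ.ne_zero i j
  have hi : (Q i j ^ u') ^ (-(toggleSign up)) = Q i j ^ (-(u' * (u + v))) := by
    rw [← zpow_mul]
    exact hQ.zpow_eq_zpow i j (by simpa [mul_sub, neg_add_eq_sub] using hw.mul_left u')
  have hj : (Q i j ^ v) ^ (-(toggleSign up')) = Q i j ^ (-(v * (u' + v'))) := by
    rw [← zpow_mul]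
    exact hQ.zpow_eq_zpow i j (by simpa [mul_sub, neg_add_eq_sub] using hw'.mul_left v)
  have hneg : ∀ x : k, (-x) ^ (-(toggleSign up)) = -(x ^ (-(toggleSign up))) := by
    intro x; cases up <;> simp [toggleSign, inv_neg]
  simp only [twist, hij, hij.not_gt, if_true, if_false, hneg, hi, hj]
  rw [hT, hQ.swap_eq_inv i j, smul_smul, neg_mul, neg_smul, inv_zpow', ← zpow_add₀ hne,
    ← zpow_add₀ hne]
  congr 3
  ring

lemma twistedOp_anticommute (hQ : IsRootMatrix a Q) (hij : i ≠ j)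
    (hw : (a : ℤ) ∣ u + v - toggleSign up) (hw' : (a : ℤ) ∣ u' + v' - toggleSign up')
    (hT : T * T' = (Q i j ^ (u * u') * Q j i ^ (v * v')) • (T' * T)) :
    Anticommute (twistedOp Q up i u v T) (twistedOp Q up' j u' v' T') := by
  rcases hij.lt_or_gt with h | h
  · exact twistedOp_anticommute_of_lt hQ h hw hw' hT
  · refine (twistedOp_anticommute_of_lt hQ h hw' hw ?_).symm
    rw [hT, smul_smul, hQ.swap_eq_inv i j, inv_zpow', inv_zpow', ← zpow_add₀ (hQ.ne_zero i j),
      ← zpow_add₀ (hQ.ne_zero i j), ← zpow_add₀ (hQ.ne_zero i j)]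
    ring_nf
    simp

lemma norm_exponent_dvd {m : ℕ} (hm : m ∈ Finset.range a) :
    (a : ℤ) ∣ (m : ℤ) + ((a - 1 - m : ℕ) : ℤ) - toggleSign false := by
  have := Finset.mem_range.1 hm
  exact ⟨1, by simp only [toggleSign, Bool.false_eq_true, if_false]; lia⟩

lemma HasWeight.anticommute_commutatorOp (hT : HasWeight Q L R i u v T) (hQ : IsRootMatrix a Q)
    (hij : i ≠ j) (hw : (a : ℤ) ∣ u + v - toggleSign up) :
    Anticommute (twistedOp Q up i u v T) (commutatorOp Q L R j) := by
  refine Anticommute.sub_right ?_ ?_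
  · exact twistedOp_anticommute hQ hij hw (by simp [toggleSign])
      (by simpa using hT.mul_monomial hij 1 0)
  · exact twistedOp_anticommute hQ hij hw (by simp [toggleSign])
      (by simpa using hT.mul_monomial hij 0 1)

lemma HasWeight.anticommute_normOp (hT : HasWeight Q L R i u v T) (hQ : IsRootMatrix a Q)
    (hij : i ≠ j) (hw : (a : ℤ) ∣ u + v - toggleSign up) :
    Anticommute (twistedOp Q up i u v T) (normOp a Q L R j) :=
  Anticommute.sum_right fun m hm =>
    twistedOp_anticommute hQ hij hw (norm_exponent_dvd hm) (hT.mul_monomial hij m (a - 1 - m))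

lemma commutatorOp_anticommute_commutatorOp (hQ : IsRootMatrix a Q)
    (hV : IsQuantumBimodule a Q L R) (hij : i ≠ j) :
    Anticommute (commutatorOp Q L R i) (commutatorOp Q L R j) :=
  ((hV.hasWeight_left i).anticommute_commutatorOp hQ hij (by simp [toggleSign])).sub_left
    ((hV.hasWeight_right i).anticommute_commutatorOp hQ hij (by simp [toggleSign]))

lemma commutatorOp_anticommute_normOp (hQ : IsRootMatrix a Q)
    (hV : IsQuantumBimodule a Q L R) (hij : i ≠ j) :
    Anticommute (commutatorOp Q L R i) (normOp a Q L R j) :=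
  ((hV.hasWeight_left i).anticommute_normOp hQ hij (by simp [toggleSign])).sub_left
    ((hV.hasWeight_right i).anticommute_normOp hQ hij (by simp [toggleSign]))

lemma normOp_anticommute_normOp (hQ : IsRootMatrix a Q)
    (hV : IsQuantumBimodule a Q L R) (hij : i ≠ j) :
    Anticommute (normOp a Q L R i) (normOp a Q L R j) :=
  Anticommute.sum_left fun m hm =>
    (hV.hasWeight_monomial hQ i m (a - 1 - m)).anticommute_normOp hQ hij (norm_exponent_dvd hm)

lemma commutatorOp_mul_self : commutatorOp Q L R i * commutatorOp Q L R i = 0 := by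
  simp [commutatorOp, twistedOp, sub_mul, mul_sub, toggle_mul_toggle_self]

lemma normOp_mul_self : normOp a Q L R i * normOp a Q L R i = 0 := by
  simp [normOp, twistedOp, Finset.sum_mul, Finset.mul_sum, toggle_mul_toggle_self]

lemma commutatorOp_apply (φ : Finset ι → V) (p : Finset ι) :
    commutatorOp Q L R i φ p = if i ∈ p then
      koszulSign k i p • (leftWeight Q i p • L i - rightWeight Q i p • R i) (φ ({i} ∆ p))
    else 0 := by
  by_cases h : i ∈ p <;> simp [commutatorOp, twistedOp_apply, h, smul_sub, mul_smul]

lemma normOp_apply (φ : Finset ι → V) (p : Finset ι) :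
    normOp a Q L R i φ p = if i ∈ p then 0 else
      koszulSign k i p • (∑ u ∈ Finset.range a,
        (leftWeight Q i p • L i) ^ u * (rightWeight Q i p • R i) ^ (a - 1 - u)) (φ ({i} ∆ p)) := by
  by_cases h : i ∈ p
  · simp [normOp, twistedOp_apply, h]
  · simp only [normOp, LinearMap.coe_sum, Finset.sum_apply, twistedOp_apply, h,
      Bool.false_eq_true, if_true, zpow_natCast, Finset.smul_sum, smul_pow,
      smul_mul_smul_comm, LinearMap.smul_apply, smul_smul, mul_assoc, if_false]

lemma commutatorOp_mul_normOp (hV : IsQuantumBimodule a Q L R) (i : ι) :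
    commutatorOp Q L R i * normOp a Q L R i = 0 := by
  refine LinearMap.ext fun φ => funext fun p => ?_
  rw [Module.End.mul_apply, commutatorOp_apply, normOp_apply]
  by_cases h : i ∈ p
  · simp only [h, if_true, mem_singleton_symmDiff_self, not_true, if_false,
      symmDiff_symmDiff_cancel_left, koszulSign_symmDiff, leftWeight_symmDiff,
      rightWeight_symmDiff, map_smul]
    rw [← Module.End.mul_apply, (hV.commute_smul i _ _).mul_geom_sum₂, smul_pow, smul_pow,
      hV.left.pow_eq_zero, hV.right.pow_eq_zero]
    simp
  · simp [h]

lemma normOp_mul_commutatorOp (hV : IsQuantumBimodule a Q L R) (i : ι) :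
    normOp a Q L R i * commutatorOp Q L R i = 0 := by
  refine LinearMap.ext fun φ => funext fun p => ?_
  rw [Module.End.mul_apply, normOp_apply, commutatorOp_apply]
  by_cases h : i ∈ p
  · simp [h]
  · simp only [h, if_true, mem_singleton_symmDiff_self, not_false_iff, if_false,
      symmDiff_symmDiff_cancel_left, koszulSign_symmDiff, leftWeight_symmDiff,
      rightWeight_symmDiff, map_smul]
    rw [← Module.End.mul_apply, (hV.commute_smul i _ _).geom_sum₂_mul, smul_pow, smul_pow,
      hV.left.pow_eq_zero, hV.right.pow_eq_zero]
    simp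

end Pieces

/-- Cochains with values in `V`, i.e. elements of the completion of `k[y] ⊗ Λ ⊗ V`: `φ β p` is the
coefficient at the monomial `y ^ β` and the exterior monomial of `p`. -/
abbrev Cochain (ι V : Type*) : Type _ := (ι →₀ ℕ) → Finset ι → V

section Cochain

variable {ι k V : Type*} [CommRing k] [AddCommGroup V] [Module k V]

/-- The linear action on functions `(ι →₀ ℕ) → W` of an endomorphism of `W`. -/
def coeffwise (ι : Type*) {k W : Type*} [CommRing k] [AddCommGroup W] [Module k W] :
    Module.End k W →+* Module.End k ((ι →₀ ℕ) → W) where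
  toFun T := T.compLeft (ι →₀ ℕ)
  map_one' := rfl
  map_mul' _ _ := rfl
  map_zero' := rfl
  map_add' _ _ := rfl

/-- Multiplication of a cochain by the variable `y i`. -/
noncomputable def shift (k : Type*) {ι V : Type*} [CommRing k] [AddCommGroup V] [Module k V]
    (i : ι) : Module.End k (Cochain ι V) :=
  LinearMap.pi fun β => if β i = 0 then 0 else LinearMap.proj (β - Finsupp.single i 1)

/-- Division of a cochain by the variable `y i`, discarding the monomials not divisible by it. -/
noncomputable def unshift (k : Type*) {ι V : Type*} [CommRing k] [AddCommGroup V] [Module k V]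
    (i : ι) : Module.End k (Cochain ι V) :=
  LinearMap.funLeft k (Finset ι → V) (· + Finsupp.single i 1)

/-- The projection to the component of degree `n`, where each `y i` has degree `2` and each
exterior generator has degree `1`. -/
noncomputable def component (k : Type*) {ι V : Type*} [CommRing k] [AddCommGroup V] [Module k V]
    (n : ℕ) : Module.End k (Cochain ι V) :=
  LinearMap.pi fun β => LinearMap.pi fun p =>
    if 2 * β.degree + p.card = n then LinearMap.proj p ∘ₗ LinearMap.proj β else 0

/-- The homogeneous cochains of degree `n`. -/
noncomputable def homogeneous (k ι V : Type*) [CommRing k] [AddCommGroup V] [Module k V] (n : ℕ) :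
    Submodule k (Cochain ι V) :=
  LinearMap.eqLocus (component k n) LinearMap.id

variable {i j : ι} {n : ℕ} {φ : Cochain ι V} {β : ι →₀ ℕ} {p : Finset ι}

lemma coeffwise_apply {W : Type*} [AddCommGroup W] [Module k W] (T : Module.End k W)
    (φ : (ι →₀ ℕ) → W) : coeffwise ι T φ β = T (φ β) := rfl

lemma unshift_apply : unshift k i φ β = φ (β + Finsupp.single i 1) := rfl

lemma shift_apply : shift k i φ β = if β i = 0 then 0 else φ (β - Finsupp.single i 1) := by
  simp only [shift, LinearMap.pi_apply]
  split_ifs <;> rfl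

lemma shift_apply_add_single : shift k i φ (β + Finsupp.single i 1) = φ β := by
  simp [shift_apply]

lemma shift_apply_of_eq_zero (h : β i = 0) : shift k i φ β = 0 := by
  simp [shift_apply, h]

lemma component_apply :
    component k n φ β p = if 2 * β.degree + p.card = n then φ β p else 0 := by
  simp only [component, LinearMap.pi_apply]
  split_ifs <;> rfl

lemma mem_homogeneous : φ ∈ homogeneous k ι V n ↔ component k n φ = φ := Iff.rfl

lemma mem_homogeneous_iff :
    φ ∈ homogeneous k ι V n ↔ ∀ β p, φ β p ≠ 0 → 2 * β.degree + p.card = n := by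
  simp only [mem_homogeneous, funext_iff, component_apply, ite_eq_left_iff, eq_comm (a := (0 : V))]
  exact forall₂_congr fun _ _ => not_imp_comm

lemma component_mem_homogeneous (n : ℕ) (φ : Cochain ι V) :
    component k n φ ∈ homogeneous k ι V n := by
  refine mem_homogeneous_iff.2 fun β p h => ?_
  by_contra hn
  exact h (by rw [component_apply, if_neg hn])

lemma commute_coeffwise_shift (T : Module.End k (Finset ι → V)) (i : ι) :
    Commute (coeffwise ι T) (shift k i) := by
  refine LinearMap.ext fun φ => funext fun β => ?_
  simp only [Module.End.mul_apply, coeffwise_apply, shift_apply]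
  split_ifs <;> simp

lemma commute_coeffwise_unshift (T : Module.End k (Finset ι → V)) (i : ι) :
    Commute (coeffwise ι T) (unshift k i) :=
  rfl

lemma commute_shift_shift (i j : ι) : Commute (shift k (V := V) i) (shift k j) := by
  classical
  rcases eq_or_ne i j with rfl | hij
  · rfl
  refine LinearMap.ext fun φ => funext fun β => ?_
  simp only [Module.End.mul_apply, shift_apply, Finsupp.tsub_apply,
    Finsupp.single_eq_of_ne hij, Finsupp.single_eq_of_ne hij.symm, tsub_zero]
  rw [tsub_right_comm]
  split_ifs <;> rfl

lemma commute_unshift_shift (hij : i ≠ j) : Commute (unshift k (V := V) i) (shift k j) := by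
  classical
  refine LinearMap.ext fun φ => funext fun β => ?_
  simp only [Module.End.mul_apply, unshift_apply, shift_apply, Finsupp.add_apply,
    Finsupp.single_eq_of_ne hij.symm, add_zero]
  split_ifs with h
  · rfl
  · rw [tsub_add_eq_add_tsub]
    exact Finsupp.single_le_iff.2 (Nat.one_le_iff_ne_zero.2 h)

lemma unshift_mul_shift (i : ι) : unshift k i * shift k i = (1 : Module.End k (Cochain ι V)) :=
  LinearMap.ext fun _ => funext fun _ => shift_apply_add_single

lemma shift_unshift_apply :
    shift k i (unshift k i φ) β = if β i = 0 then 0 else φ β := by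
  rw [shift_apply]
  split_ifs with h
  · rfl
  · rw [unshift_apply, Finsupp.sub_add_single_one_cancel h]

lemma component_shift (n : ℕ) (i : ι) (φ : Cochain ι V) :
    component k (n + 2) (shift k i φ) = shift k i (component k n φ) := by
  funext β p
  rw [component_apply]
  by_cases h : β i = 0
  · simp [shift_apply_of_eq_zero h]
  · obtain ⟨γ, rfl⟩ : ∃ γ, β = γ + Finsupp.single i 1 :=
      ⟨_, (Finsupp.sub_add_single_one_cancel h).symm⟩
    rw [shift_apply_add_single, shift_apply_add_single, component_apply]
    refine if_congr ?_ rfl rfl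
    simp only [map_add, Finsupp.degree_single]
    lia

lemma component_unshift (n : ℕ) (i : ι) (φ : Cochain ι V) :
    component k n (unshift k i φ) = unshift k i (component k (n + 2) φ) := by
  funext β p
  rw [component_apply, unshift_apply, unshift_apply, component_apply]
  refine if_congr ?_ rfl rfl
  simp only [map_add, Finsupp.degree_single]
  lia

lemma shift_mem_homogeneous (hφ : φ ∈ homogeneous k ι V n) (i : ι) :
    shift k i φ ∈ homogeneous k ι V (n + 2) := by
  rw [mem_homogeneous, component_shift, mem_homogeneous.1 hφ]

lemma unshift_mem_homogeneous (hφ : φ ∈ homogeneous k ι V (n + 2)) (i : ι) :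
    unshift k i φ ∈ homogeneous k ι V n := by
  rw [mem_homogeneous, component_unshift, mem_homogeneous.1 hφ]

end Cochain

section ShiftDifferential

variable {ι k V : Type*} [CommRing k] [AddCommGroup V] [Module k V]

/-- A differential on cochains which raises the degree by one and is `k[y]`-linear. -/
structure IsShiftDifferential (d : Module.End k (Cochain ι V)) : Prop where
  apply_apply : ∀ φ, d (d φ) = 0
  apply_shift : ∀ i φ, d (shift k i φ) = shift k i (d φ)
  component_apply : ∀ n φ, component k (n + 1) (d φ) = d (component k n φ)

/-- Vanishing of the cohomology of `d` in degree `n + 1`. -/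
def ExactAt (d : Module.End k (Cochain ι V)) (n : ℕ) : Prop :=
  ∀ z ∈ homogeneous k ι V (n + 1), d z = 0 → ∃ v ∈ homogeneous k ι V n, d v = z

/-- The cochains divisible by the ideal `(y i | i ∈ J)`. -/
def shiftIdeal (k : Type*) {ι : Type*} (V : Type*) [CommRing k] [AddCommGroup V] [Module k V]
    (J : Finset ι) : Submodule k (Cochain ι V) where
  carrier := {φ | ∀ β, (∀ i ∈ J, β i = 0) → φ β = 0}
  add_mem' hφ hψ β hβ := by rw [Pi.add_apply, hφ β hβ, hψ β hβ, add_zero]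
  zero_mem' _ _ := rfl
  smul_mem' r φ hφ β hβ := by rw [Pi.smul_apply, hφ β hβ, smul_zero]

/-- Vanishing, in degree `n + 1`, of the cohomology of the quotient of the cochain complex by the
ideal `(y i | i ∈ J)`. -/
def ExactModuloAt (d : Module.End k (Cochain ι V)) (J : Finset ι) (n : ℕ) : Prop :=
  ∀ z ∈ homogeneous k ι V (n + 1), d z ∈ shiftIdeal k V J →
    ∃ v ∈ homogeneous k ι V n, z - d v ∈ shiftIdeal k V J

variable {d : Module.End k (Cochain ι V)} {J : Finset ι} {φ : Cochain ι V} {i : ι} {n : ℕ}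

lemma IsShiftDifferential.apply_mem_homogeneous (hd : IsShiftDifferential d)
    (hφ : φ ∈ homogeneous k ι V n) : d φ ∈ homogeneous k ι V (n + 1) := by
  rw [mem_homogeneous, hd.component_apply, mem_homogeneous.1 hφ]

lemma mem_shiftIdeal_empty : φ ∈ shiftIdeal k V ∅ ↔ φ = 0 :=
  ⟨fun h => funext fun β => h β (by simp), fun h => h ▸ zero_mem _⟩

lemma exactModuloAt_empty : ExactModuloAt d ∅ n ↔ ExactAt d n := by
  simp only [ExactModuloAt, ExactAt, mem_shiftIdeal_empty, sub_eq_zero, eq_comm (b := d _)]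

lemma shift_mem_shiftIdeal_of_mem (hi : i ∈ J) (φ : Cochain ι V) :
    shift k i φ ∈ shiftIdeal k V J :=
  fun _ hβ => shift_apply_of_eq_zero (hβ i hi)

lemma shift_mem_shiftIdeal (hφ : φ ∈ shiftIdeal k V J) (i : ι) :
    shift k i φ ∈ shiftIdeal k V J := by
  intro β hβ
  rw [shift_apply, hφ _ fun j hj => by simp [hβ j hj], ite_self]

lemma mem_shiftIdeal_of_shift_mem (hi : i ∉ J) (h : shift k i φ ∈ shiftIdeal k V J) :
    φ ∈ shiftIdeal k V J := by
  intro β hβ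
  rw [← shift_apply_add_single (k := k) (i := i) (φ := φ)]
  refine h _ fun j hj => ?_
  rw [Finsupp.add_apply, hβ j hj, zero_add,
    Finsupp.single_eq_of_ne (ne_of_mem_of_not_mem hj hi)]

lemma exactModuloAt_univ [Fintype ι] (hn : Fintype.card ι ≤ n) :
    ExactModuloAt d Finset.univ n := by
  refine fun z hz _ => ⟨0, zero_mem _, fun β hβ => funext fun p => ?_⟩
  obtain rfl : β = 0 := Finsupp.ext fun i => hβ i (Finset.mem_univ i)
  by_contra h0
  have hdeg := mem_homogeneous_iff.1 hz 0 p (by simpa using h0)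
  have hp := Finset.card_le_univ p
  simp only [map_zero, mul_zero, zero_add] at hdeg
  lia

lemma shiftIdeal_le_insert [DecidableEq ι] (i : ι) :
    shiftIdeal k V J ≤ shiftIdeal k V (insert i J) :=
  fun _ h β hβ => h β fun j hj => hβ j (Finset.mem_insert_of_mem hj)

lemma sub_shift_unshift_mem_shiftIdeal [DecidableEq ι]
    (h : φ ∈ shiftIdeal k V (insert i J)) :
    φ - shift k i (unshift k i φ) ∈ shiftIdeal k V J := by
  intro β hβ
  rw [Pi.sub_apply, shift_unshift_apply]
  split_ifs with h0
  · rw [sub_zero]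
    exact h β (Finset.forall_mem_insert _ _ _ |>.2 ⟨h0, hβ⟩)
  · exact sub_self _

lemma IsShiftDifferential.apply_mem_shiftIdeal (hd : IsShiftDifferential d)
    (hφ : φ ∈ shiftIdeal k V J) : d φ ∈ shiftIdeal k V J := by
  classical
  induction J using Finset.induction_on generalizing φ with
  | empty => rw [mem_shiftIdeal_empty] at *; rw [hφ, map_zero]
  | insert i J _ ih =>
    have h := shiftIdeal_le_insert i (ih (sub_shift_unshift_mem_shiftIdeal hφ))
    rw [map_sub, hd.apply_shift] at h
    simpa using add_mem h
      (shift_mem_shiftIdeal_of_mem (Finset.mem_insert_self i J) (d (unshift k i φ)))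

lemma IsShiftDifferential.exactModuloAt_insert [DecidableEq ι] (hd : IsShiftDifferential d)
    (hi : i ∉ J) (h₀ : ExactModuloAt d J n) (h₁ : ExactModuloAt d J (n + 1)) :
    ExactModuloAt d (insert i J) (n + 1) := by
  intro w hw hdw
  have hdiv := sub_shift_unshift_mem_shiftIdeal hdw
  set z := unshift k i (d w)
  have hdz : d z ∈ shiftIdeal k V J := by
    have := hd.apply_mem_shiftIdeal hdiv
    rw [map_sub, hd.apply_apply, zero_sub, hd.apply_shift, neg_mem_iff] at this
    exact mem_shiftIdeal_of_shift_mem hi this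
  obtain ⟨v, hv, hzv⟩ := h₀ z (unshift_mem_homogeneous (hd.apply_mem_homogeneous hw) i) hdz
  have hcocycle : d (w - shift k i v) ∈ shiftIdeal k V J := by
    have := add_mem hdiv (shift_mem_shiftIdeal hzv i)
    rwa [map_sub, ← hd.apply_shift i v, sub_add_sub_cancel, ← map_sub] at this
  obtain ⟨u, hu, hwu⟩ := h₁ _ (sub_mem hw (shift_mem_homogeneous hv i)) hcocycle
  refine ⟨u, hu, ?_⟩
  have := add_mem (shiftIdeal_le_insert i hwu)
    (shift_mem_shiftIdeal_of_mem (Finset.mem_insert_self i J) v)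
  rwa [sub_right_comm, sub_add_cancel] at this

lemma IsShiftDifferential.exactModuloAt_of_insert [DecidableEq ι] (hd : IsShiftDifferential d)
    (hi : i ∉ J) (h : ExactModuloAt d J (n + 2)) (h' : ExactModuloAt d (insert i J) (n + 1)) :
    ExactModuloAt d J n := by
  intro z hz hdz
  obtain ⟨w, hw, hzw⟩ := h (shift k i z) (shift_mem_homogeneous hz i)
    (by rw [hd.apply_shift]; exact shift_mem_shiftIdeal hdz i)
  have hdw : d w ∈ shiftIdeal k V (insert i J) := by
    have := sub_mem (shift_mem_shiftIdeal_of_mem (k := k) (Finset.mem_insert_self i J) z)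
      (shiftIdeal_le_insert i hzw)
    rwa [sub_sub_cancel] at this
  obtain ⟨v, hv, hwv⟩ := h' w hw hdw
  refine ⟨unshift k i (w - d v), unshift_mem_homogeneous (sub_mem hw (hd.apply_mem_homogeneous hv))
    i, mem_shiftIdeal_of_shift_mem hi ?_⟩
  have hdiv := hd.apply_mem_shiftIdeal (sub_shift_unshift_mem_shiftIdeal hwv)
  have := add_mem hzw hdiv
  rwa [map_sub, map_sub, hd.apply_apply, sub_zero, hd.apply_shift, sub_add_sub_cancel,
    ← map_sub] at this

/-- Descending induction on `J`: modulo all the `y i` the complex is bounded, and the long exact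
sequences of multiplication by `y i` transport the bound. -/
lemma IsShiftDifferential.exactModuloAt_of_eventually [Fintype ι] (hd : IsShiftDifferential d)
    {N : ℕ} (h : ∀ n ≥ N, ExactModuloAt d J n) (hn : Fintype.card ι ≤ n) :
    ExactModuloAt d J n := by
  classical
  induction hm : Jᶜ.card generalizing J n N with
  | zero =>
    rw [Finset.card_eq_zero, Finset.compl_eq_empty_iff] at hm
    exact hm ▸ exactModuloAt_univ hn
  | succ m ih =>
    obtain ⟨i, hi⟩ := Finset.card_pos.1 (m.succ_pos.trans_eq hm.symm)
    have hiJ : i ∉ J := Finset.mem_compl.1 hi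
    have hinsert : ∀ l ≥ Fintype.card ι, ExactModuloAt d (insert i J) l := by
      refine fun l hl => ih (N := N + 1) (fun l hl => ?_) hl ?_
      · obtain ⟨l, rfl⟩ := Nat.exists_eq_add_of_le' (Nat.le_of_add_left_le hl)
        exact hd.exactModuloAt_insert hiJ (h l (by lia)) (h (l + 1) (by lia))
      · rw [Finset.compl_insert, Finset.card_erase_of_mem hi, hm, Nat.add_sub_cancel]
    have hdescend : ∀ t, ∀ l ≥ Fintype.card ι, ExactModuloAt d J (l + 2 * t) →
        ExactModuloAt d J l := by
      intro t
      induction t with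
      | zero => exact fun _ _ h => h
      | succ t iht =>
        exact fun l hl h => iht l hl (hd.exactModuloAt_of_insert hiJ h (hinsert _ (by lia)))
    exact hdescend N n hn (h _ (by lia))

theorem IsShiftDifferential.exactAt_of_eventually [Fintype ι] (hd : IsShiftDifferential d) {N : ℕ}
    (h : ∀ n ≥ N, ExactAt d n) (hn : Fintype.card ι ≤ n) : ExactAt d n := by
  simp only [← exactModuloAt_empty] at *
  exact hd.exactModuloAt_of_eventually h hn

end ShiftDifferential

section Periodicity

variable {ι k V : Type*} [CommRing k] [AddCommGroup V] [Module k V]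

open MvPolynomial in
/-- Nakayama without grading: modulo the augmentation ideal, a submodule of a `k[y]`-module is
spanned over `k` by any of its generating sets. -/
lemma exists_eq_add_sum_X_smul_of_mem_span [Fintype ι] {F : Type*} [AddCommGroup F] [Module k F]
    [Module (MvPolynomial ι k) F] [IsScalarTower k (MvPolynomial ι k) F] {G : Set F} {f : F}
    (hf : f ∈ Submodule.span (MvPolynomial ι k) G) :
    ∃ g ∈ Submodule.span k G, ∃ w : ι → F,
      (∀ i, w i ∈ Submodule.span (MvPolynomial ι k) G) ∧
        f = g + ∑ i, (X i : MvPolynomial ι k) • w i := by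
  classical
  induction hf using Submodule.span_induction with
  | mem g hg => exact ⟨g, Submodule.subset_span hg, 0, fun _ => zero_mem _, by simp⟩
  | zero => exact ⟨0, zero_mem _, 0, fun _ => zero_mem _, by simp⟩
  | add x y _ _ hx hy =>
    obtain ⟨g, hg, w, hw, rfl⟩ := hx
    obtain ⟨g', hg', w', hw', rfl⟩ := hy
    refine ⟨g + g', add_mem hg hg', w + w', fun i => add_mem (hw i) (hw' i), ?_⟩
    simp only [Pi.add_apply, smul_add, Finset.sum_add_distrib]
    abel
  | smul s x hx hx' =>
    induction s using MvPolynomial.induction_on generalizing x with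
    | C r =>
      obtain ⟨g, hg, w, hw, rfl⟩ := hx'
      refine ⟨r • g, Submodule.smul_mem _ r hg, fun i => C r • w i,
        fun i => Submodule.smul_mem _ _ (hw i), ?_⟩
      rw [smul_add, Finset.smul_sum, ← algebraMap_eq, algebraMap_smul]
      simp only [smul_comm (algebraMap k (MvPolynomial ι k) r)]
    | add s t hs ht =>
      obtain ⟨g, hg, w, hw, hsx⟩ := hs x hx hx'
      obtain ⟨g', hg', w', hw', htx⟩ := ht x hx hx'
      refine ⟨g + g', add_mem hg hg', w + w', fun i => add_mem (hw i) (hw' i), ?_⟩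
      simp only [add_smul, hsx, htx, Pi.add_apply, smul_add, Finset.sum_add_distrib]
      abel
    | mul_X s i _ =>
      refine ⟨0, zero_mem _, Pi.single i (s • x), fun j => ?_, ?_⟩
      · rcases eq_or_ne j i with rfl | hj
        · simpa using Submodule.smul_mem _ s hx
        · simp [hj]
      · rw [zero_add, mul_comm, mul_smul, Finset.sum_eq_single i]
        · simp
        · intro j _ hj; simp [hj]
        · simp

variable {σ : Type*}

/-- The cochain whose coefficients are the images under `π` of those of a family of polynomials. -/
noncomputable def cochainOfPolynomials (π : (σ → k) →ₗ[k] (Finset ι → V)) :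
    (σ → MvPolynomial ι k) →ₗ[k] Cochain ι V :=
  LinearMap.pi fun β => π ∘ₗ LinearMap.pi fun j => MvPolynomial.lcoeff k β ∘ₗ LinearMap.proj j

variable {π : (σ → k) →ₗ[k] (Finset ι → V)}

lemma cochainOfPolynomials_apply (f : σ → MvPolynomial ι k) (β : ι →₀ ℕ) :
    cochainOfPolynomials π f β = π fun j => (f j).coeff β := rfl

lemma cochainOfPolynomials_X_smul (i : ι) (f : σ → MvPolynomial ι k) :
    cochainOfPolynomials π ((MvPolynomial.X i : MvPolynomial ι k) • f) =
      shift k i (cochainOfPolynomials π f) := by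
  classical
  funext β
  rw [cochainOfPolynomials_apply, shift_apply]
  split_ifs with h
  · have h0 : ∀ j, (((MvPolynomial.X i : MvPolynomial ι k) • f) j).coeff β = 0 := by
      simp [MvPolynomial.coeff_X_mul', h]
    simp only [h0]
    exact map_zero π
  · simp [cochainOfPolynomials_apply, MvPolynomial.coeff_X_mul', h]

lemma exists_cochainOfPolynomials_eq (hπ : Function.Surjective π) {z : Cochain ι V}
    (hz : (Function.support z).Finite) : ∃ f, cochainOfPolynomials π f = z := by
  classical
  choose c hc using hπ
  refine ⟨fun j => ∑ β ∈ hz.toFinset, MvPolynomial.monomial β (c (z β) j), funext fun β => ?_⟩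
  rw [cochainOfPolynomials_apply]
  by_cases hβ : z β = 0
  · simp only [MvPolynomial.coeff_sum, MvPolynomial.coeff_monomial, Finset.sum_ite_eq',
      Set.Finite.mem_toFinset, Function.mem_support, hβ, ne_eq, not_true_eq_false, if_false]
    exact map_zero π
  · simp [MvPolynomial.coeff_sum, MvPolynomial.coeff_monomial, hβ, hc]

/-- The preimage of a shift-stable space of cochains in a free module over the polynomial ring. -/
noncomputable def polynomialPreimage (π : (σ → k) →ₗ[k] (Finset ι → V))
    (K : Submodule k (Cochain ι V)) (hK : ∀ i, ∀ z ∈ K, shift k i z ∈ K) :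
    Submodule (MvPolynomial ι k) (σ → MvPolynomial ι k) where
  __ := K.comap (cochainOfPolynomials π)
  smul_mem' s f hf := by
    induction s using MvPolynomial.induction_on generalizing f with
    | C r =>
      rw [← MvPolynomial.algebraMap_eq, algebraMap_smul]
      exact Submodule.smul_mem _ r hf
    | add p q hp hq => rw [add_smul]; exact Submodule.add_mem _ (hp f hf) (hq f hf)
    | mul_X p i hp =>
      rw [mul_smul]
      refine hp _ ?_
      change cochainOfPolynomials π _ ∈ K
      rw [cochainOfPolynomials_X_smul]
      exact hK i _ hf

lemma exists_component_cochainOfPolynomials_eq_zero [Finite ι] [Finite σ]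
    (f : σ → MvPolynomial ι k) :
    ∃ N, ∀ n ≥ N, component k n (cochainOfPolynomials π f) = 0 := by
  have := Fintype.ofFinite ι
  have := Fintype.ofFinite σ
  refine ⟨2 * (∑ j, (f j).totalDegree) + Fintype.card ι + 1, fun n hn => ?_⟩
  funext β p
  rw [component_apply, cochainOfPolynomials_apply]
  split_ifs with h
  · suffices hc : ∀ j, (f j).coeff β = 0 by
      simp only [hc]
      exact congrFun (map_zero π) p
    intro j
    by_contra hj
    have hβ : β.degree ≤ (f j).totalDegree :=
      MvPolynomial.le_totalDegree (MvPolynomial.mem_support_iff.2 hj)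
    have hsum : (f j).totalDegree ≤ ∑ j, (f j).totalDegree :=
      Finset.single_le_sum (f := fun j => (f j).totalDegree) (fun _ _ => Nat.zero_le _)
        (Finset.mem_univ j)
    have hp := Finset.card_le_univ p
    lia
  · rfl

lemma finite_support_of_mem_homogeneous [Finite ι] {n : ℕ} {z : Cochain ι V}
    (hz : z ∈ homogeneous k ι V n) : (Function.support z).Finite := by
  refine (Finsupp.finite_of_degree_le n).subset fun β hβ => ?_
  obtain ⟨p, hp⟩ := Function.ne_iff.1 hβ
  have := mem_homogeneous_iff.1 hz β p hp
  change β.degree ≤ n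
  lia

lemma exists_eq_sum_shift_component [Fintype ι] [IsNoetherianRing k] [Module.Finite k V]
    (K : Submodule k (Cochain ι V)) (hK : ∀ i, ∀ z ∈ K, shift k i z ∈ K) :
    ∃ N, ∀ n ≥ N, ∀ z ∈ K, z ∈ homogeneous k ι V (n + 2) →
      ∃ w : ι → Cochain ι V, (∀ i, w i ∈ K) ∧ z = ∑ i, shift k i (component k n (w i)) := by
  obtain ⟨r, π, hπ⟩ := Module.Finite.exists_fin' k (Finset ι → V)
  obtain ⟨G, hG⟩ : (polynomialPreimage π K hK).FG := IsNoetherian.noetherian _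
  choose N hN using exists_component_cochainOfPolynomials_eq_zero (k := k) (π := π)
  refine ⟨∑ g ∈ G, N g, fun n hn z hzK hz => ?_⟩
  obtain ⟨f, rfl⟩ := exists_cochainOfPolynomials_eq hπ (finite_support_of_mem_homogeneous hz)
  have hfG : f ∈ polynomialPreimage π K hK := hzK
  rw [← hG] at hfG
  obtain ⟨g, hg, w, hw, hf⟩ := exists_eq_add_sum_X_smul_of_mem_span hfG
  have hg0 : component k (n + 2) (cochainOfPolynomials π g) = 0 := by
    suffices Submodule.span k (G : Set (Fin r → MvPolynomial ι k)) ≤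
        LinearMap.ker (component k (n + 2) ∘ₗ cochainOfPolynomials π) from this hg
    refine Submodule.span_le.2 fun g hg => hN g _ ?_
    exact le_trans (Finset.single_le_sum (f := N) (fun _ _ => Nat.zero_le _) hg) (by lia)
  refine ⟨fun i => cochainOfPolynomials π (w i), fun i => ?_, ?_⟩
  · have := hw i
    rw [hG] at this
    exact this
  · rw [← mem_homogeneous.1 hz, hf]
    simp only [map_add, map_sum, hg0, zero_add, cochainOfPolynomials_X_smul, component_shift]

theorem IsShiftDifferential.exists_exactAt_add_two [Finite ι] [IsNoetherianRing k]
    [Module.Finite k V] {d : Module.End k (Cochain ι V)} (hd : IsShiftDifferential d) :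
    ∃ N, ∀ n ≥ N, ExactAt d n → ExactAt d (n + 2) := by
  have := Fintype.ofFinite ι
  obtain ⟨N, hN⟩ := exists_eq_sum_shift_component (LinearMap.ker d) fun i z hz => by
    rw [LinearMap.mem_ker] at *
    rw [hd.apply_shift, hz, map_zero]
  refine ⟨N, fun n hn hexact z hz hdz => ?_⟩
  obtain ⟨w, hw, rfl⟩ := hN (n + 1) (hn.trans n.le_succ) z hdz hz
  have hv : ∀ i, ∃ v ∈ homogeneous k ι V n, d v = component k (n + 1) (w i) := fun i => by
    refine hexact _ (component_mem_homogeneous _ _) ?_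
    rw [← hd.component_apply, LinearMap.mem_ker.1 (hw i), map_zero]
  choose v hv hdv using hv
  refine ⟨∑ i, shift k i (v i), sum_mem fun i _ => shift_mem_homogeneous (hv i) i, ?_⟩
  rw [map_sum]
  exact Finset.sum_congr rfl fun i _ => by rw [hd.apply_shift, hdv]

end Periodicity

section QuantumDifferential

section Component

variable {ι k V : Type*} [DecidableEq ι] [Field k] [AddCommGroup V] [Module k V]
  {i : ι} {g : ι → k} {T : Module.End k V} {n : ℕ}

lemma component_coeffwise_toggle_true (φ : Cochain ι V) :
    component k (n + 1) (coeffwise ι (toggle true i g T) φ) =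
      coeffwise ι (toggle true i g T) (component k n φ) := by
  funext β p
  simp only [component_apply, coeffwise_apply, toggle_apply]
  by_cases hi : i ∈ p
  · have hp := Finset.card_erase_add_one hi
    simp only [hi, if_true, singleton_symmDiff_of_mem hi, apply_ite T, map_zero,
      smul_ite, smul_zero]
    exact if_congr (by lia) rfl rfl
  · simp [hi]

lemma component_coeffwise_toggle_false (φ : Cochain ι V) :
    component k n (coeffwise ι (toggle false i g T) φ) =
      coeffwise ι (toggle false i g T) (component k (n + 1) φ) := by
  funext β p
  simp only [component_apply, coeffwise_apply, toggle_apply]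
  by_cases hi : i ∈ p
  · simp [hi]
  · simp only [hi, Bool.false_eq_true, if_true, singleton_symmDiff_of_notMem hi,
      Finset.card_insert_of_notMem hi, apply_ite T, map_zero, smul_ite, smul_zero]
    exact if_congr (by lia) rfl rfl

lemma component_shift_coeffwise_toggle_false (φ : Cochain ι V) :
    component k (n + 1) (shift k i (coeffwise ι (toggle false i g T) φ)) =
      shift k i (coeffwise ι (toggle false i g T) (component k n φ)) := by
  funext β p
  rw [component_apply]
  by_cases h : β i = 0
  · simp [shift_apply_of_eq_zero h]
  · obtain ⟨γ, rfl⟩ : ∃ γ, β = γ + Finsupp.single i 1 :=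
      ⟨_, (Finsupp.sub_add_single_one_cancel h).symm⟩
    simp only [shift_apply_add_single, coeffwise_apply, toggle_apply, component_apply]
    by_cases hi : i ∈ p
    · simp [hi]
    · simp only [hi, Bool.false_eq_true, if_true, singleton_symmDiff_of_notMem hi, map_add,
        Finset.card_insert_of_notMem hi, apply_ite T, map_zero, smul_ite, smul_zero,
        Finsupp.degree_single]
      exact if_congr (by lia) rfl rfl

end Component

variable {ι k V : Type*} [LinearOrder ι] [Field k] [AddCommGroup V] [Module k V]

/-- The summand of the differential which belongs to the generator `x i`. -/
noncomputable def partialDifferential (a : ℕ) (Q : ι → ι → k) (L R : ι → Module.End k V) (i : ι) :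
    Module.End k (Cochain ι V) :=
  coeffwise ι (commutatorOp Q L R i) + shift k i * coeffwise ι (normOp a Q L R i)

/-- The differential of the total complex computing the Hochschild cohomology of the quantum
complete intersection with values in the bimodule `V`. -/
noncomputable def quantumDifferential [Fintype ι] (a : ℕ) (Q : ι → ι → k)
    (L R : ι → Module.End k V) : Module.End k (Cochain ι V) :=
  ∑ i, partialDifferential a Q L R i

variable {a n : ℕ} {Q : ι → ι → k} {L R : ι → Module.End k V} {i j : ι}

lemma commute_partialDifferential_shift (i j : ι) :
    Commute (partialDifferential a Q L R i) (shift k j) :=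
  (commute_coeffwise_shift _ j).add_left
    ((commute_shift_shift i j).mul_left (commute_coeffwise_shift _ j))

lemma Anticommute.coeffwise_partialDifferential {X : Module.End k (Finset ι → V)}
    (hC : Anticommute X (commutatorOp Q L R j)) (hN : Anticommute X (normOp a Q L R j)) :
    Anticommute (coeffwise ι X) (partialDifferential a Q L R j) :=
  (hC.map _).add_right ((hN.map _).mul_right (commute_coeffwise_shift X j))

lemma partialDifferential_anticommute (hQ : IsRootMatrix a Q) (hV : IsQuantumBimodule a Q L R)
    (hij : i ≠ j) :
    Anticommute (partialDifferential a Q L R i) (partialDifferential a Q L R j) := by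
  have hC := (commutatorOp_anticommute_commutatorOp hQ hV hij).coeffwise_partialDifferential
    (commutatorOp_anticommute_normOp hQ hV hij)
  have hN := (commutatorOp_anticommute_normOp hQ hV hij.symm).symm.coeffwise_partialDifferential
    (normOp_anticommute_normOp hQ hV hij)
  exact hC.add_left (hN.mul_left (commute_partialDifferential_shift j i).symm)

lemma partialDifferential_mul_self (hV : IsQuantumBimodule a Q L R) (i : ι) :
    partialDifferential a Q L R i * partialDifferential a Q L R i = 0 := by
  have hC := commute_coeffwise_shift (commutatorOp Q L R i) i
  have hN := commute_coeffwise_shift (normOp a Q L R i) i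
  rw [partialDifferential, add_mul, mul_add, mul_add, hC.left_comm, hN.mul_mul_mul_comm,
    mul_assoc (shift k i)]
  simp only [← map_mul, commutatorOp_mul_self, commutatorOp_mul_normOp hV,
    normOp_mul_commutatorOp hV, normOp_mul_self, map_zero, mul_zero, add_zero]

lemma component_partialDifferential (n : ℕ) (φ : Cochain ι V) :
    component k (n + 1) (partialDifferential a Q L R i φ) =
      partialDifferential a Q L R i (component k n φ) := by
  simp only [partialDifferential, commutatorOp, normOp, twistedOp, map_sub, map_sum, map_add,
    LinearMap.add_apply, LinearMap.sub_apply, LinearMap.sum_apply, Module.End.mul_apply,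
    component_coeffwise_toggle_true, component_shift_coeffwise_toggle_false]

lemma isShiftDifferential_quantumDifferential [Fintype ι] (hQ : IsRootMatrix a Q)
    (hV : IsQuantumBimodule a Q L R) : IsShiftDifferential (quantumDifferential a Q L R) where
  apply_apply := LinearMap.congr_fun <| Anticommute.sum_mul_self
    (fun _ _ => partialDifferential_anticommute hQ hV) (partialDifferential_mul_self hV) _
  apply_shift i := by
    have h : Commute (quantumDifferential a Q L R) (shift k i) :=
      Commute.sum_left _ _ _ fun j _ => commute_partialDifferential_shift j i
    exact LinearMap.congr_fun h.eq
  component_apply n φ := by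
    simp only [quantumDifferential, LinearMap.sum_apply, map_sum, component_partialDifferential]

end QuantumDifferential

section ShiftPair

variable {E : Type*} [Ring E] {a : ℕ} {x y p : E}

/-- The relations between the truncated shift `y` of `M ^ a` and the opposite truncated shift `p`,
which say that `p` inverts `y` up to the projections to the end terms. -/
structure IsShiftPair (a : ℕ) (y p : E) : Prop where
  one_sub_mul_pow : ∀ u < a, (1 - y * p) * p ^ u = p ^ (a - 1) * y ^ (a - 1 - u)
  pow_mul_one_sub : ∀ u < a, p ^ u * (1 - p * y) = y ^ (a - 1 - u) * p ^ (a - 1)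

namespace IsShiftPair

lemma smul {k : Type*} [Field k] [Algebra k E] (h : IsShiftPair a y p) {r : k} (hr : r ≠ 0) :
    IsShiftPair a (r • y) (r⁻¹ • p) := by
  have hpow : ∀ u < a, r⁻¹ ^ u = r⁻¹ ^ (a - 1) * r ^ (a - 1 - u) := fun u hu => by
    rw [← Nat.sub_sub_self (Nat.le_sub_one_of_lt hu), pow_sub₀ _ (inv_ne_zero hr) (Nat.sub_le _ _),
      inv_pow r (a - 1 - u), inv_inv, Nat.sub_sub_self (Nat.le_sub_one_of_lt hu)]
  constructor <;> intro u hu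
  · rw [smul_mul_smul_comm, mul_inv_cancel₀ hr, one_smul, smul_pow, mul_smul_comm,
      h.one_sub_mul_pow u hu, smul_pow, smul_pow, smul_mul_smul_comm, hpow u hu]
  · rw [smul_mul_smul_comm, inv_mul_cancel₀ hr, one_smul, smul_pow, smul_mul_assoc,
      h.pow_mul_one_sub u hu, smul_pow, smul_pow, smul_mul_smul_comm, hpow u hu, mul_comm]

lemma pow_mul_geom_sum_sub (h : IsShiftPair a y p) (hxy : Commute x y) (hxp : Commute x p)
    (hx : x ^ a = 0) :
    p ^ (a - 1) * ∑ u ∈ Finset.range a, x ^ u * y ^ (a - 1 - u) -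
      (x - y) * ∑ u ∈ Finset.range a, x ^ u * p ^ (u + 1) = 1 := by
  have hterm : ∀ u ∈ Finset.range a, p ^ (a - 1) * (x ^ u * y ^ (a - 1 - u)) -
      (x - y) * (x ^ u * p ^ (u + 1)) = x ^ u * p ^ u - x ^ (u + 1) * p ^ (u + 1) := by
    intro u hu
    rw [(hxp.pow_pow u (a - 1)).symm.left_comm, ← h.one_sub_mul_pow u (Finset.mem_range.1 hu),
      sub_mul x y, (hxy.symm.pow_right u).left_comm, ← mul_assoc x, ← pow_succ', sub_mul, one_mul,
      mul_assoc, ← pow_succ', mul_sub]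
    abel
  rw [Finset.mul_sum, Finset.mul_sum, ← Finset.sum_sub_distrib, Finset.sum_congr rfl hterm,
    Finset.sum_range_sub' (fun u => x ^ u * p ^ u), hx]
  simp

lemma geom_sum_mul_pow_sub (h : IsShiftPair a y p) (hxp : Commute x p) (hx : x ^ a = 0) :
    (∑ u ∈ Finset.range a, x ^ u * y ^ (a - 1 - u)) * p ^ (a - 1) -
      (∑ u ∈ Finset.range a, x ^ u * p ^ (u + 1)) * (x - y) = 1 := by
  have hterm : ∀ u ∈ Finset.range a, x ^ u * y ^ (a - 1 - u) * p ^ (a - 1) -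
      x ^ u * p ^ (u + 1) * (x - y) = x ^ u * p ^ u - x ^ (u + 1) * p ^ (u + 1) := by
    intro u hu
    rw [mul_assoc, ← h.pow_mul_one_sub u (Finset.mem_range.1 hu), mul_sub _ x y, mul_assoc,
      (hxp.pow_right (u + 1)).symm.eq, ← mul_assoc (x ^ u) x, ← pow_succ, mul_sub, mul_one,
      ← mul_assoc (p ^ u), ← pow_succ, mul_sub]
    noncomm_ring
  rw [Finset.sum_mul, Finset.sum_mul, ← Finset.sum_sub_distrib, Finset.sum_congr rfl hterm,
    Finset.sum_range_sub' (fun u => x ^ u * p ^ u), hx]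
  simp

end IsShiftPair

end ShiftPair

section Homotopy

variable {ι k V : Type*} [LinearOrder ι] [Field k] [AddCommGroup V] [Module k V]

/-- An operator on a bimodule inverting the right action of `x i` up to end terms, as exists on
`Hom` into a coinduced or out of an induced module; it yields a contraction in the `i`-th
direction. -/
structure IsContraction (a : ℕ) (Q : ι → ι → k) (L R : ι → Module.End k V) (i : ι)
    (S : Module.End k V) : Prop where
  hasWeight : HasWeight Q L R i 0 (-1) S
  commute : Commute (L i) S
  isShiftPair : IsShiftPair a (R i) S

/-- The exterior-degree-lowering part of the contracting homotopy in the `i`-th direction. -/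
def homotopyDown (a : ℕ) (Q : ι → ι → k) (L : ι → Module.End k V) (i : ι) (S : Module.End k V) :
    Module.End k (Finset ι → V) :=
  ∑ u ∈ Finset.range a, twistedOp Q false i u (-(u + 1 : ℤ)) (L i ^ u * S ^ (u + 1))

/-- The exterior-degree-raising part of the contracting homotopy in the `i`-th direction. -/
def homotopyUp (a : ℕ) (Q : ι → ι → k) (i : ι) (S : Module.End k V) :
    Module.End k (Finset ι → V) :=
  twistedOp Q true i 0 (-((a - 1 : ℕ) : ℤ)) (S ^ (a - 1))

/-- The contracting homotopy in the `i`-th direction. -/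
noncomputable def partialHomotopy (a : ℕ) (Q : ι → ι → k) (L : ι → Module.End k V) (i : ι)
    (S : Module.End k V) : Module.End k (Cochain ι V) :=
  unshift k i * coeffwise ι (homotopyUp a Q i S) - coeffwise ι (homotopyDown a Q L i S)

variable {a n : ℕ} {Q : ι → ι → k} {L R : ι → Module.End k V} {i j : ι} {S : Module.End k V}
  {p : Finset ι}

lemma homotopyDown_apply (φ : Finset ι → V) (p : Finset ι) :
    homotopyDown a Q L i S φ p = if i ∈ p then 0 else
      koszulSign k i p • (∑ u ∈ Finset.range a,
        (leftWeight Q i p • L i) ^ u * ((rightWeight Q i p)⁻¹ • S) ^ (u + 1)) (φ ({i} ∆ p)) := by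
  by_cases h : i ∈ p
  · simp [homotopyDown, twistedOp_apply, h]
  · simp only [homotopyDown, LinearMap.coe_sum, Finset.sum_apply, twistedOp_apply, h,
      Bool.false_eq_true, if_true, zpow_natCast, Finset.smul_sum, smul_pow, inv_pow, zpow_neg,
      smul_mul_smul_comm, LinearMap.smul_apply, smul_smul, mul_assoc, if_false,
      ← Nat.cast_succ]

lemma homotopyUp_apply (φ : Finset ι → V) (p : Finset ι) :
    homotopyUp a Q i S φ p = if i ∈ p then
      koszulSign k i p • (((rightWeight Q i p)⁻¹ • S) ^ (a - 1)) (φ ({i} ∆ p)) else 0 := by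
  simp only [homotopyUp, twistedOp_apply, iff_true, zpow_zero, mul_one, zpow_neg, zpow_natCast,
    smul_pow, inv_pow, LinearMap.smul_apply, smul_smul]

lemma homotopyUp_mul_commutatorOp : homotopyUp a Q i S * commutatorOp Q L R i = 0 := by
  simp [homotopyUp, commutatorOp, twistedOp, mul_sub, toggle_mul_toggle_self]

lemma commutatorOp_mul_homotopyUp : commutatorOp Q L R i * homotopyUp a Q i S = 0 := by
  simp [homotopyUp, commutatorOp, twistedOp, sub_mul, toggle_mul_toggle_self]

lemma homotopyDown_mul_normOp : homotopyDown a Q L i S * normOp a Q L R i = 0 := by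
  simp [homotopyDown, normOp, twistedOp, Finset.sum_mul, Finset.mul_sum, toggle_mul_toggle_self]

lemma normOp_mul_homotopyDown : normOp a Q L R i * homotopyDown a Q L i S = 0 := by
  simp [homotopyDown, normOp, twistedOp, Finset.sum_mul, Finset.mul_sum, toggle_mul_toggle_self]

lemma normOp_mul_homotopyUp_apply (φ : Finset ι → V) (p : Finset ι) :
    (normOp a Q L R i * homotopyUp a Q i S) φ p = if i ∈ p then 0 else
      ((∑ u ∈ Finset.range a,
        (leftWeight Q i p • L i) ^ u * (rightWeight Q i p • R i) ^ (a - 1 - u)) *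
          ((rightWeight Q i p)⁻¹ • S) ^ (a - 1)) (φ p) := by
  rw [Module.End.mul_apply, normOp_apply, homotopyUp_apply]
  by_cases h : i ∈ p
  · simp [h]
  · simp only [h, if_false, mem_singleton_symmDiff_self, not_false_iff, if_true,
      symmDiff_symmDiff_cancel_left, koszulSign_symmDiff, rightWeight_symmDiff, map_smul, smul_smul,
      koszulSign_mul_self, one_smul, Module.End.mul_apply]

lemma IsContraction.fiberwise_homotopy (hS : IsContraction a Q L R i S) (hQ : IsRootMatrix a Q)
    (hV : IsQuantumBimodule a Q L R) :
    homotopyUp a Q i S * normOp a Q L R i - commutatorOp Q L R i * homotopyDown a Q L i S +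
      (normOp a Q L R i * homotopyUp a Q i S -
        homotopyDown a Q L i S * commutatorOp Q L R i) = 1 := by
  refine LinearMap.ext fun φ => funext fun p => ?_
  have hpair := hS.isShiftPair.smul (rightWeight_ne_zero hQ i p)
  have hLR := hV.commute_smul i (leftWeight Q i p) (rightWeight Q i p)
  have hLS : Commute (leftWeight Q i p • L i) ((rightWeight Q i p)⁻¹ • S) :=
    (hS.commute.smul_left _).smul_right _
  have hL : (leftWeight Q i p • L i) ^ a = 0 := by
    rw [smul_pow, hV.left.pow_eq_zero, smul_zero]
  have hup := LinearMap.congr_fun (hpair.pow_mul_geom_sum_sub hLR hLS hL) (φ p)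
  have hdown := LinearMap.congr_fun (hpair.geom_sum_mul_pow_sub hLS hL) (φ p)
  simp only [LinearMap.add_apply, LinearMap.sub_apply, Module.End.mul_apply, Module.End.one_apply,
    Pi.add_apply, Pi.sub_apply, commutatorOp_apply, normOp_apply, homotopyUp_apply,
    homotopyDown_apply, mem_singleton_symmDiff_self] at hup hdown ⊢
  by_cases h : i ∈ p
  · simpa only [h, not_true, if_true, if_false, symmDiff_symmDiff_cancel_left, koszulSign_symmDiff,
      leftWeight_symmDiff, rightWeight_symmDiff, map_smul, smul_smul, koszulSign_mul_self,
      one_smul, smul_sub, sub_self, add_zero] using hup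
  · simpa only [h, not_false_iff, if_true, if_false, symmDiff_symmDiff_cancel_left,
      koszulSign_symmDiff, leftWeight_symmDiff, rightWeight_symmDiff, map_smul, smul_smul,
      koszulSign_mul_self, one_smul, map_sub, sub_self, zero_add] using hdown

/-- Only the monomials free of `y i` are not contracted, as division by `y i` loses them. -/
lemma IsContraction.partialDifferential_mul_partialHomotopy_add (hS : IsContraction a Q L R i S)
    (hQ : IsRootMatrix a Q) (hV : IsQuantumBimodule a Q L R) :
    partialDifferential a Q L R i * partialHomotopy a Q L i S +
        partialHomotopy a Q L i S * partialDifferential a Q L R i =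
      1 - (1 - shift k i * unshift k i) *
        coeffwise ι (normOp a Q L R i * homotopyUp a Q i S) := by
  have hfiber := congrArg (coeffwise ι) (hS.fiberwise_homotopy hQ hV)
  rw [map_one, map_add, map_sub, map_sub] at hfiber
  rw [partialDifferential, partialHomotopy, add_mul, mul_sub, mul_sub, sub_mul, mul_add, mul_add,
    (commute_coeffwise_unshift (commutatorOp Q L R i) i).left_comm,
    (commute_coeffwise_unshift (normOp a Q L R i) i).mul_mul_mul_comm,
    (commute_coeffwise_shift (homotopyUp a Q i S) i).mul_mul_mul_comm,
    (commute_coeffwise_shift (homotopyDown a Q L i S) i).left_comm,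
    mul_assoc (shift k i) (coeffwise ι (normOp a Q L R i)),
    mul_assoc (unshift k i) (coeffwise ι (homotopyUp a Q i S)), unshift_mul_shift,
    sub_mul 1 (shift k i * unshift k i)]
  simp only [← map_mul, homotopyUp_mul_commutatorOp, commutatorOp_mul_homotopyUp,
    homotopyDown_mul_normOp, normOp_mul_homotopyDown, map_zero, mul_zero, one_mul, mul_assoc]
  refine sub_eq_zero.1 (Eq.trans ?_ (sub_eq_zero.2 hfiber))
  abel

lemma IsContraction.partialHomotopy_apply (hS : IsContraction a Q L R i S)
    (hQ : IsRootMatrix a Q) (hV : IsQuantumBimodule a Q L R) (z : Cochain ι V) {β : ι →₀ ℕ}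
    (hβ : (i ∈ p ∨ β i ≠ 0) ∨ z β p = 0) :
    (partialDifferential a Q L R i (partialHomotopy a Q L i S z) +
      partialHomotopy a Q L i S (partialDifferential a Q L R i z)) β p = z β p := by
  have h := congrFun (congrFun
    (LinearMap.congr_fun (hS.partialDifferential_mul_partialHomotopy_add hQ hV) z) β) p
  simp only [LinearMap.add_apply, LinearMap.sub_apply, Module.End.mul_apply, Module.End.one_apply,
    sub_mul, one_mul, Pi.sub_apply, shift_unshift_apply] at h
  rw [h, sub_eq_self, coeffwise_apply]
  by_cases h0 : β i = 0
  · rw [if_pos h0, Pi.zero_apply, sub_zero, normOp_mul_homotopyUp_apply]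
    rcases hβ with (hp | hne) | hz
    · rw [if_pos hp]
    · exact absurd h0 hne
    · rw [hz, map_zero, ite_self]
  · rw [if_neg h0, sub_self]

lemma component_partialHomotopy (n : ℕ) (φ : Cochain ι V) :
    component k n (partialHomotopy a Q L i S φ) =
      partialHomotopy a Q L i S (component k (n + 1) φ) := by
  simp only [partialHomotopy, homotopyUp, homotopyDown, twistedOp, map_sub, map_sum,
    LinearMap.sub_apply, LinearMap.sum_apply, Module.End.mul_apply, component_unshift,
    component_coeffwise_toggle_true, component_coeffwise_toggle_false]

lemma IsContraction.partialHomotopy_anticommute (hS : IsContraction a Q L R i S)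
    (hQ : IsRootMatrix a Q) (hV : IsQuantumBimodule a Q L R) (ha : 0 < a) (hij : i ≠ j) :
    Anticommute (partialHomotopy a Q L i S) (partialDifferential a Q L R j) := by
  have hup : HasWeight Q L R i 0 (-((a - 1 : ℕ) : ℤ)) (S ^ (a - 1)) := by
    simpa using hS.hasWeight.pow hQ (a - 1)
  have hup' : (a : ℤ) ∣ 0 + -((a - 1 : ℕ) : ℤ) - toggleSign true :=
    ⟨-1, by simp only [toggleSign, if_true]; lia⟩
  have hdown : ∀ u : ℕ, HasWeight Q L R i u (-(u + 1 : ℤ)) (L i ^ u * S ^ (u + 1)) := fun u => by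
    simpa using ((hV.hasWeight_left i).pow hQ u).mul hQ (hS.hasWeight.pow hQ (u + 1))
  have hdown' : ∀ u : ℕ, (a : ℤ) ∣ u + -(u + 1 : ℤ) - toggleSign false := fun u =>
    ⟨0, by simp only [toggleSign, Bool.false_eq_true, if_false]; lia⟩
  refine Anticommute.sub_left (Anticommute.mul_left ?_ ?_) ?_
  · exact (hup.anticommute_commutatorOp hQ hij hup').coeffwise_partialDifferential
      (hup.anticommute_normOp hQ hij hup')
  · exact (commute_coeffwise_unshift _ i).symm.add_right
      ((commute_unshift_shift hij).mul_right (commute_coeffwise_unshift _ i).symm)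
  · exact (Anticommute.sum_left fun u _ =>
      (hdown u).anticommute_commutatorOp hQ hij (hdown' u)).coeffwise_partialDifferential
      (Anticommute.sum_left fun u _ => (hdown u).anticommute_normOp hQ hij (hdown' u))

variable [Fintype ι]

lemma IsContraction.quantumDifferential_partialHomotopy_add (hS : IsContraction a Q L R i S)
    (hQ : IsRootMatrix a Q) (hV : IsQuantumBimodule a Q L R) (ha : 0 < a) (z : Cochain ι V) :
    quantumDifferential a Q L R (partialHomotopy a Q L i S z) +
        partialHomotopy a Q L i S (quantumDifferential a Q L R z) =
      partialDifferential a Q L R i (partialHomotopy a Q L i S z) +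
        partialHomotopy a Q L i S (partialDifferential a Q L R i z) := by
  have hanti : Anticommute (partialHomotopy a Q L i S)
      (∑ j ∈ Finset.univ.erase i, partialDifferential a Q L R j) :=
    Anticommute.sum_right fun j hj =>
      hS.partialHomotopy_anticommute hQ hV ha (Finset.ne_of_mem_erase hj).symm
  have h := LinearMap.congr_fun hanti z
  simp only [Module.End.mul_apply, LinearMap.neg_apply] at h
  rw [quantumDifferential, ← Finset.add_sum_erase _ _ (Finset.mem_univ i), LinearMap.add_apply,
    LinearMap.add_apply, map_add, h]
  abel

lemma exists_sub_quantumDifferential_apply_eq_zero (hQ : IsRootMatrix a Q)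
    (hV : IsQuantumBimodule a Q L R) (ha : 0 < a) (hS : ∀ i, ∃ S, IsContraction a Q L R i S)
    {z : Cochain ι V} (hz : z ∈ homogeneous k ι V (n + 1)) (hdz : quantumDifferential a Q L R z = 0)
    (s : Finset ι) :
    ∃ v ∈ homogeneous k ι V n, ∀ β p, (∃ i ∈ s, i ∈ p ∨ β i ≠ 0) →
      (z - quantumDifferential a Q L R v) β p = 0 := by
  have hd := isShiftDifferential_quantumDifferential hQ hV
  induction s using Finset.induction_on with
  | empty => exact ⟨0, zero_mem _, by simp⟩
  | insert i s _ ih =>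
    obtain ⟨v, hv, hvz⟩ := ih
    obtain ⟨S, hS⟩ := hS i
    set w := z - quantumDifferential a Q L R v with hw
    have hwn : w ∈ homogeneous k ι V (n + 1) := sub_mem hz (hd.apply_mem_homogeneous hv)
    have hdw : quantumDifferential a Q L R w = 0 := by
      rw [hw, map_sub, hdz, hd.apply_apply, sub_zero]
    have hhomotopy := hS.quantumDifferential_partialHomotopy_add hQ hV ha w
    rw [hdw, map_zero, add_zero] at hhomotopy
    refine ⟨v + partialHomotopy a Q L i S w, add_mem hv ?_, fun β p hβ => ?_⟩
    · rw [mem_homogeneous, component_partialHomotopy, mem_homogeneous.1 hwn]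
    · rw [map_add, ← sub_sub, ← hw, hhomotopy, Pi.sub_apply, Pi.sub_apply,
        hS.partialHomotopy_apply hQ hV, sub_self]
      obtain ⟨j, hj, hjp⟩ := hβ
      rcases Finset.mem_insert.1 hj with rfl | hjs
      · exact Or.inl hjp
      · exact Or.inr (hvz β p ⟨j, hjs, hjp⟩)

theorem exactAt_of_forall_exists_isContraction (hQ : IsRootMatrix a Q)
    (hV : IsQuantumBimodule a Q L R) (ha : 0 < a) (hS : ∀ i, ∃ S, IsContraction a Q L R i S)
    (n : ℕ) : ExactAt (quantumDifferential a Q L R) n := by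
  intro z hz hdz
  have hd := isShiftDifferential_quantumDifferential hQ hV
  obtain ⟨v, hv, hvz⟩ :=
    exists_sub_quantumDifferential_apply_eq_zero hQ hV ha hS hz hdz Finset.univ
  refine ⟨v, hv, (sub_eq_zero.1 (funext fun β => funext fun p => ?_)).symm⟩
  by_contra h0
  have hdeg := mem_homogeneous_iff.1 (sub_mem hz (hd.apply_mem_homogeneous hv)) β p h0
  refine h0 (hvz β p ?_)
  by_contra! hne
  obtain rfl : p = ∅ := Finset.eq_empty_of_forall_notMem fun i => (hne i (Finset.mem_univ i)).1
  obtain rfl : β = 0 := Finsupp.ext fun i => (hne i (Finset.mem_univ i)).2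
  simp at hdeg

end Homotopy

section Functoriality

variable {ι k V V' V'' : Type*} [CommRing k] [AddCommGroup V] [Module k V] [AddCommGroup V']
  [Module k V'] [AddCommGroup V''] [Module k V'']

/-- The map on cochains induced by a linear map of coefficients. -/
def mapCochain (ι : Type*) (T : V →ₗ[k] V') : Cochain ι V →ₗ[k] Cochain ι V' :=
  (T.compLeft (Finset ι)).compLeft (ι →₀ ℕ)

variable {T : V →ₗ[k] V'} {U : V' →ₗ[k] V''} {φ : Cochain ι V} {n : ℕ}

lemma mapCochain_apply (T : V →ₗ[k] V') (φ : Cochain ι V) (β : ι →₀ ℕ) (p : Finset ι) :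
    mapCochain ι T φ β p = T (φ β p) := rfl

lemma component_mapCochain (T : V →ₗ[k] V') (n : ℕ) (φ : Cochain ι V) :
    component k n (mapCochain ι T φ) = mapCochain ι T (component k n φ) := by
  funext β p
  simp only [component_apply, mapCochain_apply, apply_ite T, map_zero]

lemma mapCochain_mem_homogeneous (hφ : φ ∈ homogeneous k ι V n) (T : V →ₗ[k] V') :
    mapCochain ι T φ ∈ homogeneous k ι V' n := by
  rw [mem_homogeneous, component_mapCochain, mem_homogeneous.1 hφ]

lemma mapCochain_injective (hT : Function.Injective T) : Function.Injective (mapCochain ι T) :=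
  hT.comp_left.comp_left

lemma mapCochain_mapCochain_of_exact (h : Function.Exact T U) (φ : Cochain ι V) :
    mapCochain ι U (mapCochain ι T φ) = 0 :=
  funext fun _ => funext fun _ => h.apply_apply_eq_zero _

lemma exists_mapCochain_eq {z : Cochain ι V'} (hz : z ∈ homogeneous k ι V' n)
    (h : ∀ β p, ∃ v, T v = z β p) : ∃ y ∈ homogeneous k ι V n, mapCochain ι T y = z := by
  choose y hy using h
  refine ⟨component k n y, component_mem_homogeneous n y, ?_⟩
  rw [← component_mapCochain, show mapCochain ι T y = z from funext fun β => funext (hy β),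
    mem_homogeneous.1 hz]

/-- Cocycles of degree `n` lift to cocycles along the map induced by `U`. -/
def CocyclesLiftAt (d' : Module.End k (Cochain ι V')) (d'' : Module.End k (Cochain ι V''))
    (U : V' →ₗ[k] V'') (n : ℕ) : Prop :=
  ∀ z ∈ homogeneous k ι V'' n, d'' z = 0 →
    ∃ y ∈ homogeneous k ι V' n, d' y = 0 ∧ mapCochain ι U y = z

/-- A short exact sequence of cochain complexes induced by one of coefficients. -/
structure IsShortExact (d : Module.End k (Cochain ι V)) (d' : Module.End k (Cochain ι V'))
    (d'' : Module.End k (Cochain ι V'')) (T : V →ₗ[k] V') (U : V' →ₗ[k] V'') : Prop where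
  injective : Function.Injective T
  exact : Function.Exact T U
  surjective : Function.Surjective U
  map_left : ∀ φ, mapCochain ι T (d φ) = d' (mapCochain ι T φ)
  map_right : ∀ φ, mapCochain ι U (d' φ) = d'' (mapCochain ι U φ)

namespace IsShortExact

variable {d : Module.End k (Cochain ι V)} {d' : Module.End k (Cochain ι V')}
  {d'' : Module.End k (Cochain ι V'')}

lemma exists_lift (h : IsShortExact d d' d'' T U) {z : Cochain ι V''}
    (hz : z ∈ homogeneous k ι V'' n) : ∃ y ∈ homogeneous k ι V' n, mapCochain ι U y = z :=
  exists_mapCochain_eq hz fun β p => h.surjective (z β p)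

lemma exists_preimage (h : IsShortExact d d' d'' T U) {y : Cochain ι V'}
    (hy : y ∈ homogeneous k ι V' n) (hUy : mapCochain ι U y = 0) :
    ∃ x ∈ homogeneous k ι V n, mapCochain ι T x = y :=
  exists_mapCochain_eq hy fun β p => (h.exact (y β p)).1 (congrFun (congrFun hUy β) p)

lemma cocyclesLiftAt_of_exactAt (h : IsShortExact d d' d'' T U) (hd' : IsShiftDifferential d')
    (hn : ExactAt d n) : CocyclesLiftAt d' d'' U n := by
  intro z hz hdz
  obtain ⟨y, hy, rfl⟩ := h.exists_lift hz
  obtain ⟨w, hw, hTw⟩ := h.exists_preimage (hd'.apply_mem_homogeneous hy)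
    (by rw [h.map_right, hdz])
  have hdw : d w = 0 := mapCochain_injective h.injective <| by
    rw [h.map_left, hTw, hd'.apply_apply, map_zero]
  obtain ⟨v, hv, rfl⟩ := hn w hw hdw
  refine ⟨y - mapCochain ι T v, sub_mem hy (mapCochain_mem_homogeneous hv T), ?_, ?_⟩
  · rw [map_sub, ← h.map_left, hTw, sub_self]
  · rw [map_sub, mapCochain_mapCochain_of_exact h.exact, sub_zero]

lemma exactAt_of_cocyclesLiftAt (h : IsShortExact d d' d'' T U) (hn' : ExactAt d' n)
    (hn : CocyclesLiftAt d' d'' U n) : ExactAt d n := by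
  intro w hw hdw
  obtain ⟨y, hy, hdy⟩ := hn' (mapCochain ι T w) (mapCochain_mem_homogeneous hw T)
    (by rw [← h.map_left, hdw, map_zero])
  obtain ⟨x, hx, hdx, hUx⟩ := hn (mapCochain ι U y) (mapCochain_mem_homogeneous hy U)
    (by rw [← h.map_right, hdy, mapCochain_mapCochain_of_exact h.exact])
  obtain ⟨v, hv, hTv⟩ := h.exists_preimage (sub_mem hy hx) (by rw [map_sub, hUx, sub_self])
  refine ⟨v, hv, mapCochain_injective h.injective ?_⟩
  rw [h.map_left, hTv, map_sub, hdx, sub_zero, hdy]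

lemma exactAt_iff_cocyclesLiftAt (h : IsShortExact d d' d'' T U) (hd' : IsShiftDifferential d')
    (hn' : ExactAt d' n) : ExactAt d n ↔ CocyclesLiftAt d' d'' U n :=
  ⟨h.cocyclesLiftAt_of_exactAt hd', h.exactAt_of_cocyclesLiftAt hn'⟩

lemma cocyclesLiftAt_succ_iff (h : IsShortExact d d' d'' T U) (hd' : IsShiftDifferential d')
    (hn' : ExactAt d' n) : CocyclesLiftAt d' d'' U (n + 1) ↔ ExactAt d'' n := by
  constructor
  · intro hn z hz hdz
    obtain ⟨y, hy, hdy, rfl⟩ := hn z hz hdz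
    obtain ⟨x, hx, rfl⟩ := hn' y hy hdy
    exact ⟨mapCochain ι U x, mapCochain_mem_homogeneous hx U, (h.map_right x).symm⟩
  · intro hn z hz hdz
    obtain ⟨v, hv, rfl⟩ := hn z hz hdz
    obtain ⟨y, hy, rfl⟩ := h.exists_lift hv
    exact ⟨d' y, hd'.apply_mem_homogeneous hy, hd'.apply_apply y, h.map_right y⟩

lemma exactAt_succ_iff (h : IsShortExact d d' d'' T U) (hd' : IsShiftDifferential d')
    (hn' : ∀ n, ExactAt d' n) : ExactAt d (n + 1) ↔ ExactAt d'' n :=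
  (h.exactAt_iff_cocyclesLiftAt hd' (hn' _)).trans (h.cocyclesLiftAt_succ_iff hd' (hn' n))

end IsShortExact

lemma ExactAt.of_retract {d : Module.End k (Cochain ι V)} {d' : Module.End k (Cochain ι V')}
    {T : V →ₗ[k] V'} {U : V' →ₗ[k] V} (hT : ∀ φ, mapCochain ι T (d φ) = d' (mapCochain ι T φ))
    (hU : ∀ φ, mapCochain ι U (d' φ) = d (mapCochain ι U φ)) (hUT : ∀ v, U (T v) = v)
    (h : ExactAt d' n) : ExactAt d n := by
  intro z hz hdz
  obtain ⟨v, hv, hdv⟩ := h (mapCochain ι T z) (mapCochain_mem_homogeneous hz T)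
    (by rw [← hT, hdz, map_zero])
  refine ⟨mapCochain ι U v, mapCochain_mem_homogeneous hv U, ?_⟩
  rw [← hU, hdv]
  exact funext fun β => funext fun p => hUT (z β p)

variable [DecidableEq ι]

/-- The degree zero cochain with value `f`. -/
def constCochain (ι : Type*) [DecidableEq ι] (f : V) : Cochain ι V :=
  Pi.single 0 (Pi.single ∅ f)

lemma constCochain_apply (f : V) : constCochain ι f 0 ∅ = f := by
  simp [constCochain]

lemma constCochain_mem_homogeneous (f : V) : constCochain ι f ∈ homogeneous k ι V 0 := by
  refine mem_homogeneous_iff.2 fun β p h => ?_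
  obtain rfl : β = 0 := by
    by_contra hβ
    exact h (by rw [constCochain, Pi.single_eq_of_ne hβ, Pi.zero_apply])
  obtain rfl : p = ∅ := by
    by_contra hp
    exact h (by rw [constCochain, Pi.single_eq_same, Pi.single_eq_of_ne hp])
  simp

lemma exists_eq_constCochain_of_mem_homogeneous {z : Cochain ι V}
    (hz : z ∈ homogeneous k ι V 0) : ∃ f, z = constCochain ι f := by
  refine ⟨z 0 ∅, funext fun β => funext fun p => ?_⟩
  by_cases h : β = 0 ∧ p = ∅
  · rw [h.1, h.2, constCochain_apply]
  · have hzero : ∀ w ∈ homogeneous k ι V 0, w β p = 0 := fun w hw => by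
      by_contra h0
      have := mem_homogeneous_iff.1 hw β p h0
      exact h ⟨(Finsupp.degree_eq_zero_iff β).1 (by lia), Finset.card_eq_zero.1 (by lia)⟩
    rw [hzero z hz, hzero _ (constCochain_mem_homogeneous _)]

lemma mapCochain_constCochain (T : V →ₗ[k] V') (f : V) :
    mapCochain ι T (constCochain ι f) = constCochain ι (T f) := by
  obtain ⟨g, hg⟩ := exists_eq_constCochain_of_mem_homogeneous
    (mapCochain_mem_homogeneous (constCochain_mem_homogeneous (ι := ι) f) T)
  rw [hg, ← constCochain_apply (ι := ι) g, ← hg, mapCochain_apply, constCochain_apply]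

lemma constCochain_injective : Function.Injective fun f : V => constCochain ι f := fun f g h => by
  simpa only [constCochain_apply] using congrFun (congrFun h 0) ∅

lemma cocyclesLiftAt_zero_iff {d' : Module.End k (Cochain ι V')}
    {d'' : Module.End k (Cochain ι V'')} : CocyclesLiftAt d' d'' U 0 ↔
      ∀ f : V'', d'' (constCochain ι f) = 0 → ∃ g, d' (constCochain ι g) = 0 ∧ U g = f := by
  constructor
  · intro h f hf
    obtain ⟨y, hy, hdy, hUy⟩ := h _ (constCochain_mem_homogeneous f) hf
    obtain ⟨g, rfl⟩ := exists_eq_constCochain_of_mem_homogeneous hy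
    exact ⟨g, hdy, constCochain_injective ((mapCochain_constCochain U g).symm.trans hUy)⟩
  · intro h z hz hdz
    obtain ⟨f, rfl⟩ := exists_eq_constCochain_of_mem_homogeneous hz
    obtain ⟨g, hdg, rfl⟩ := h f hdz
    exact ⟨_, constCochain_mem_homogeneous g, hdg, mapCochain_constCochain U g⟩

end Functoriality

section BimoduleMap

variable {ι k V V' V'' : Type*} [Field k] [AddCommGroup V] [Module k V] [AddCommGroup V']
  [Module k V'] [AddCommGroup V''] [Module k V'']

/-- A linear map intertwining two pairs of families of operators. -/
structure IsBimoduleMap (L R : ι → Module.End k V) (L' R' : ι → Module.End k V')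
    (T : V →ₗ[k] V') : Prop where
  map_left : ∀ i v, T (L i v) = L' i (T v)
  map_right : ∀ i v, T (R i v) = R' i (T v)

variable {a n : ℕ} {Q : ι → ι → k} {L R : ι → Module.End k V}
  {L' R' : ι → Module.End k V'} {T : V →ₗ[k] V'}

lemma mapCochain_shift (T : V →ₗ[k] V') (i : ι) (φ : Cochain ι V) :
    mapCochain ι T (shift k i φ) = shift k i (mapCochain ι T φ) := by
  funext β p
  simp only [mapCochain_apply, shift_apply]
  split_ifs
  · exact map_zero T
  · rfl

lemma IsBimoduleMap.map_monomial (hT : IsBimoduleMap L R L' R' T) (i : ι) (m n : ℕ) (v : V) :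
    T ((L i ^ m * R i ^ n) v) = (L' i ^ m * R' i ^ n) (T v) := by
  have hL := Module.End.commute_pow_left_of_commute (LinearMap.ext (hT.map_left i)).symm m
  have hR := Module.End.commute_pow_left_of_commute (LinearMap.ext (hT.map_right i)).symm n
  rw [Module.End.mul_apply, Module.End.mul_apply, ← LinearMap.comp_apply T, ← hL,
    LinearMap.comp_apply, ← LinearMap.comp_apply T, ← hR, LinearMap.comp_apply]

variable [LinearOrder ι]

lemma mapCochain_coeffwise_twistedOp {up : Bool} {i : ι} {u v : ℤ} {S : Module.End k V}
    {S' : Module.End k V'} (h : ∀ v, T (S v) = S' (T v)) (φ : Cochain ι V) :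
    mapCochain ι T (coeffwise ι (twistedOp Q up i u v S) φ) =
      coeffwise ι (twistedOp Q up i u v S') (mapCochain ι T φ) :=
  funext fun β => toggle_comp_apply h (φ β)

lemma IsBimoduleMap.mapCochain_quantumDifferential [Fintype ι] (hT : IsBimoduleMap L R L' R' T)
    (φ : Cochain ι V) : mapCochain ι T (quantumDifferential a Q L R φ) =
      quantumDifferential a Q L' R' (mapCochain ι T φ) := by
  simp only [quantumDifferential, partialDifferential, commutatorOp, normOp, map_sub, map_sum,
    map_add, LinearMap.add_apply, LinearMap.sub_apply, LinearMap.sum_apply, Module.End.mul_apply,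
    mapCochain_shift, mapCochain_coeffwise_twistedOp (hT.map_left _),
    mapCochain_coeffwise_twistedOp (hT.map_right _),
    mapCochain_coeffwise_twistedOp (hT.map_monomial _ _ _)]

lemma partialDifferential_constCochain (f : V) (i j : ι) :
    partialDifferential a Q L R i (constCochain ι f) 0 {j} =
      if i = j then L i f - R i f else 0 := by
  rw [partialDifferential, LinearMap.add_apply, Module.End.mul_apply, Pi.add_apply,
    shift_apply_of_eq_zero Finsupp.zero_apply, add_zero, coeffwise_apply, commutatorOp_apply]
  by_cases h : i = j
  · subst h
    simp [koszulSign, leftWeight, rightWeight, constCochain_apply]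
  · simp [h]

lemma quantumDifferential_constCochain_eq_zero_iff [Fintype ι] (hQ : IsRootMatrix a Q)
    (hV : IsQuantumBimodule a Q L R) {f : V} :
    quantumDifferential a Q L R (constCochain ι f) = 0 ↔ ∀ i, L i f = R i f := by
  have happly : ∀ i, quantumDifferential a Q L R (constCochain ι f) 0 {i} = L i f - R i f := by
    simp [quantumDifferential, partialDifferential_constCochain]
  refine ⟨fun h i => sub_eq_zero.1 (by rw [← happly, h]; rfl), fun h => ?_⟩
  have hdeg := (isShiftDifferential_quantumDifferential hQ hV).apply_mem_homogeneous
    (constCochain_mem_homogeneous (ι := ι) (k := k) f)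
  funext β p
  by_contra h0
  have hβp := mem_homogeneous_iff.1 hdeg β p h0
  obtain rfl := (Finsupp.degree_eq_zero_iff β).1 (by lia)
  obtain ⟨i, rfl⟩ := Finset.card_eq_one.1 (show p.card = 1 by lia)
  exact h0 (by rw [happly, h, sub_self]; rfl)

end BimoduleMap

section Lowering

/-- An operator inverting the action of `x i` up to end terms, as exists on a module induced from
the subalgebra generated by the `x j` with `j ≠ i`. -/
structure IsLowering {ι k E : Type*} [Field k] [Ring E] [Algebra k E] (a : ℕ) (Q : ι → ι → k)
    (X : ι → E) (i : ι) (y : E) : Prop where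
  mul_eq_smul : ∀ j, j ≠ i → X j * y = Q i j • (y * X j)
  isShiftPair : IsShiftPair a (X i) y

lemma IsShiftPair.map {E F : Type*} [Ring E] [Ring F] {a : ℕ} {y p : E} (h : IsShiftPair a y p)
    (f : E →+* F) : IsShiftPair a (f y) (f p) where
  one_sub_mul_pow u hu := by simpa using congrArg f (h.one_sub_mul_pow u hu)
  pow_mul_one_sub u hu := by simpa using congrArg f (h.pow_mul_one_sub u hu)

end Lowering

section Induced

variable {ι k M : Type*} [Field k] [AddCommGroup M] [Module k M]

/-- The `n`-th entry of a tuple of length `a`, extended by `0` to all `n`. -/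
def coordinate (k M : Type*) [Field k] [AddCommGroup M] [Module k M] (a n : ℕ) :
    (Fin a → M) →ₗ[k] M :=
  if h : n < a then LinearMap.proj ⟨n, h⟩ else 0

/-- The shift of tuples to the right, putting `0` in the first place. -/
def raising (k M : Type*) [Field k] [AddCommGroup M] [Module k M] (a : ℕ) :
    Module.End k (Fin a → M) :=
  LinearMap.pi fun s => if (s : ℕ) = 0 then 0 else coordinate k M a (s - 1)

/-- The shift of tuples to the left, putting `0` in the last place. -/
def lowering (k M : Type*) [Field k] [AddCommGroup M] [Module k M] (a : ℕ) :
    Module.End k (Fin a → M) :=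
  LinearMap.pi fun s => coordinate k M a (s + 1)

/-- The entrywise action of a sequence of operators on tuples. -/
def diagonal (a : ℕ) : (ℕ → Module.End k M) →+* Module.End k (Fin a → M) where
  toFun f := LinearMap.pi fun s => f s ∘ₗ LinearMap.proj s
  map_one' := rfl
  map_mul' _ _ := rfl
  map_zero' := rfl
  map_add' _ _ := rfl

/-- The operator which moves an operator `T` past `t` and the position. -/
def twistedDiagonal (a : ℕ) (r : k) (t : ℕ) (T : Module.End k M) : Module.End k (Fin a → M) :=
  diagonal a fun n => r ^ (n + t) • T

variable {a n t u : ℕ} {g : Fin a → M}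

lemma coordinate_val (s : Fin a) (g : Fin a → M) : coordinate k M a s g = g s := by
  simp [coordinate]

lemma coordinate_of_ge (h : a ≤ n) (g : Fin a → M) : coordinate k M a n g = 0 := by
  simp [coordinate, h.not_gt]

variable (k) in
lemma tuple_ext {g g' : Fin a → M} (h : ∀ n < a, coordinate k M a n g = coordinate k M a n g') :
    g = g' :=
  funext fun s => by simpa only [coordinate_val] using h s s.2

lemma coordinate_pi (f : ℕ → M) (hn : n < a) : coordinate k M a n (fun s => f s) = f n := by
  simp [coordinate, hn]

lemma coordinate_raising (hn : n < a) :
    coordinate k M a n (raising k M a g) = if n = 0 then 0 else coordinate k M a (n - 1) g := by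
  rw [← coordinate_pi (k := k) (fun n => if n = 0 then 0 else coordinate k M a (n - 1) g) hn]
  congr 1
  funext s
  simp only [raising, LinearMap.pi_apply]
  split_ifs <;> rfl

lemma coordinate_lowering : coordinate k M a n (lowering k M a g) = coordinate k M a (n + 1) g := by
  rcases lt_or_ge n a with hn | hn
  · exact coordinate_pi (fun n => coordinate k M a (n + 1) g) hn
  · rw [coordinate_of_ge hn, coordinate_of_ge (Nat.le_add_right_of_le hn)]

lemma coordinate_diagonal (f : ℕ → Module.End k M) :
    coordinate k M a n (diagonal a f g) = f n (coordinate k M a n g) := by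
  rcases lt_or_ge n a with hn | hn
  · simp only [coordinate, hn, dif_pos]
    rfl
  · rw [coordinate_of_ge hn, coordinate_of_ge hn, map_zero]

lemma coordinate_raising_pow (u : ℕ) (hn : n < a) :
    coordinate k M a n ((raising k M a ^ u) g) =
      if n < u then 0 else coordinate k M a (n - u) g := by
  induction u generalizing n with
  | zero => simp
  | succ u ih =>
    rw [pow_succ', Module.End.mul_apply, coordinate_raising hn]
    rcases n with - | n
    · simp
    · simp [ih (Nat.lt_of_succ_lt hn)]

lemma coordinate_lowering_pow (u : ℕ) :
    coordinate k M a n ((lowering k M a ^ u) g) = coordinate k M a (n + u) g := by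
  induction u generalizing n with
  | zero => simp
  | succ u ih =>
    rw [pow_succ', Module.End.mul_apply, coordinate_lowering, ih]
    congr 1
    lia

lemma raising_pow_eq_zero : raising k M a ^ a = 0 :=
  LinearMap.ext fun g => tuple_ext k fun n hn => by simp [coordinate_raising_pow, hn]

lemma isShiftPair_raising_lowering : IsShiftPair a (raising k M a) (lowering k M a) := by
  constructor <;> refine fun u hu => LinearMap.ext fun g => tuple_ext k fun n hn => ?_
  · simp only [Module.End.mul_apply, LinearMap.sub_apply, Module.End.one_apply, map_sub,
      coordinate_raising hn, coordinate_lowering, coordinate_lowering_pow]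
    rcases n with - | n
    · rw [if_pos rfl, sub_zero, coordinate_raising_pow _ (by lia), if_neg (by lia)]
      congr 2
      lia
    · rw [coordinate_of_ge (by lia : a ≤ n + 1 + (a - 1)), if_neg n.succ_ne_zero,
        Nat.add_sub_cancel, sub_self]
  · simp only [Module.End.mul_apply, LinearMap.sub_apply, Module.End.one_apply, map_sub,
      coordinate_raising_pow _ hn, coordinate_lowering, coordinate_lowering_pow]
    rcases lt_or_ge (n + u + 1) a with h | h
    · rw [coordinate_raising h, if_neg (Nat.succ_ne_zero _), Nat.add_sub_cancel, sub_self,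
        if_pos (by lia)]
    · rw [coordinate_of_ge h, sub_zero, if_neg (by lia)]
      congr 2
      lia

lemma IsShiftPair.twistedDiagonal {y p : Module.End k M} (h : IsShiftPair a y p) {r r' : k}
    (hr : r * r' = 1) (b t : ℕ) :
    IsShiftPair a (twistedDiagonal b r t y) (twistedDiagonal b r' t p) := by
  have hr0 := left_ne_zero_of_mul_eq_one hr
  obtain rfl : r' = r⁻¹ := eq_inv_of_mul_eq_one_right hr
  have hentry : ∀ n, IsShiftPair a (r ^ (n + t) • y) (r⁻¹ ^ (n + t) • p) := fun n => by
    simpa using h.smul (pow_ne_zero (n + t) hr0)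
  have hpair : IsShiftPair a (fun n : ℕ => r ^ (n + t) • y) (fun n : ℕ => r⁻¹ ^ (n + t) • p) :=
    ⟨fun u hu => funext fun n => (hentry n).one_sub_mul_pow u hu,
      fun u hu => funext fun n => (hentry n).pow_mul_one_sub u hu⟩
  exact hpair.map (diagonal b)

lemma twistedDiagonal_mul_eq_smul {S T : Module.End k M} {q : k} (h : S * T = q • (T * S))
    (r r' : k) (t : ℕ) :
    twistedDiagonal a r t S * twistedDiagonal a r' t T =
      q • (twistedDiagonal a r' t T * twistedDiagonal a r t S) := by
  rw [twistedDiagonal, twistedDiagonal, ← map_mul, ← map_mul]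
  have hentry : ∀ n, (r ^ (n + t) • S) * (r' ^ (n + t) • T) =
      q • ((r' ^ (n + t) • T) * (r ^ (n + t) • S)) := fun n => by
    rw [smul_mul_smul_comm, h, smul_mul_smul_comm, smul_comm q, mul_comm (r ^ _)]
  exact congrArg (diagonal a) (funext hentry)

lemma twistedDiagonal_mul_raising (r : k) (T : Module.End k M) :
    twistedDiagonal a r t T * raising k M a = r • (raising k M a * twistedDiagonal a r t T) := by
  refine LinearMap.ext fun g => tuple_ext k fun n hn => ?_
  simp only [twistedDiagonal, Module.End.mul_apply, LinearMap.smul_apply, map_smul,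
    coordinate_diagonal, coordinate_raising hn]
  rcases n with - | n
  · simp
  · simp only [n.succ_ne_zero, if_false, Nat.add_sub_cancel, smul_smul]
    rw [← pow_succ', add_right_comm]

lemma raising_mul_twistedDiagonal {r r' : k} (hr : r * r' = 1) (T : Module.End k M) :
    raising k M a * twistedDiagonal a r t T = r' • (twistedDiagonal a r t T * raising k M a) := by
  rw [twistedDiagonal_mul_raising, smul_smul, mul_comm r', hr, one_smul]

lemma twistedDiagonal_mul_lowering {r r' : k} (hr : r * r' = 1) (T : Module.End k M) :
    twistedDiagonal a r t T * lowering k M a =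
      r' • (lowering k M a * twistedDiagonal a r t T) := by
  refine LinearMap.ext fun g => tuple_ext k fun n _ => ?_
  simp only [twistedDiagonal, Module.End.mul_apply, LinearMap.smul_apply, map_smul,
    coordinate_diagonal, coordinate_lowering, smul_smul]
  rw [add_right_comm, pow_succ', ← mul_assoc, mul_comm r', hr, one_mul]

variable [DecidableEq ι] {Q : ι → ι → k} {X : ι → Module.End k M} {i j : ι} {y : Module.End k M}

/-- The generators of the quantum complete intersection acting on the module induced along the
inclusion of the subalgebra generated by the `x j` with `j ≠ i`. The offset `t` twists the
identification of the graded pieces with `M`. -/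
def inducedFamily (a : ℕ) (Q : ι → ι → k) (X : ι → Module.End k M) (i : ι) (t : ℕ) (j : ι) :
    Module.End k (Fin a → M) :=
  if j = i then raising k M a else twistedDiagonal a (Q j i) t (X j)

lemma inducedFamily_self : inducedFamily a Q X i t i = raising k M a := if_pos rfl

lemma inducedFamily_of_ne (h : j ≠ i) :
    inducedFamily a Q X i t j = twistedDiagonal a (Q j i) t (X j) := if_neg h

lemma isQuantumFamily_inducedFamily (hQ : IsRootMatrix a Q) (hX : IsQuantumFamily a Q X) (i : ι)
    (t : ℕ) : IsQuantumFamily a Q (inducedFamily a Q X i t) where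
  comm j l hjl := by
    rcases eq_or_ne j i with rfl | hj
    · rw [inducedFamily_self, inducedFamily_of_ne hjl.symm,
        raising_mul_twistedDiagonal (hQ.mul_swap l j)]
    rcases eq_or_ne l i with rfl | hl
    · rw [inducedFamily_self, inducedFamily_of_ne hj, twistedDiagonal_mul_raising]
    · rw [inducedFamily_of_ne hj, inducedFamily_of_ne hl,
        twistedDiagonal_mul_eq_smul (hX.comm j l hjl)]
  pow_eq_zero j := by
    rcases eq_or_ne j i with rfl | hj
    · rw [inducedFamily_self, raising_pow_eq_zero]
    · rw [inducedFamily_of_ne hj, twistedDiagonal, ← map_pow]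
      have hentry : ∀ n, (Q j i ^ (n + t) • X j) ^ a = 0 := fun n => by
        rw [smul_pow, hX.pow_eq_zero, smul_zero]
      exact (congrArg (diagonal a) (funext hentry)).trans (map_zero _)

lemma isLowering_inducedFamily_self (hQ : IsRootMatrix a Q) (X : ι → Module.End k M) (i : ι)
    (t : ℕ) : IsLowering a Q (inducedFamily a Q X i t) i (lowering k M a) where
  mul_eq_smul j hj := by
    rw [inducedFamily_of_ne hj, twistedDiagonal_mul_lowering (hQ.mul_swap j i)]
  isShiftPair := by
    rw [inducedFamily_self]
    exact isShiftPair_raising_lowering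

lemma IsLowering.inducedFamily (h : IsLowering a Q X j y) (hQ : IsRootMatrix a Q) (hij : j ≠ i)
    (t : ℕ) : IsLowering a Q (inducedFamily a Q X i t) j (twistedDiagonal a (Q i j) t y) where
  mul_eq_smul l hl := by
    rcases eq_or_ne l i with rfl | hli
    · rw [inducedFamily_self, raising_mul_twistedDiagonal (hQ.mul_swap l j)]
    · rw [inducedFamily_of_ne hli, twistedDiagonal_mul_eq_smul (h.mul_eq_smul l hl)]
  isShiftPair := by
    rw [inducedFamily_of_ne hij]
    exact h.isShiftPair.twistedDiagonal (hQ.mul_swap j i) a t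

lemma exists_isLowering_inducedFamily (hQ : IsRootMatrix a Q) {s : Finset ι}
    (hs : ∀ j ∈ s, ∃ y, IsLowering a Q X j y) (i : ι) (t : ℕ) :
    ∀ j ∈ insert i s, ∃ y, IsLowering a Q (inducedFamily a Q X i t) j y := by
  intro j hj
  rcases eq_or_ne j i with rfl | hji
  · exact ⟨_, isLowering_inducedFamily_self hQ X j t⟩
  · obtain ⟨y, hy⟩ := hs j (Finset.mem_of_mem_insert_of_ne hj hji)
    exact ⟨_, hy.inducedFamily hQ hji t⟩

/-- The map from the induced module to `M` given by the action of the powers of `x i`. -/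
def evaluation (a : ℕ) (T : Module.End k M) : (Fin a → M) →ₗ[k] M :=
  ∑ n ∈ Finset.range a, (T ^ n : Module.End k M) ∘ₗ coordinate k M a n

/-- The map from `M` to the induced module dual to `evaluation`. -/
def coevaluation (a : ℕ) (T : Module.End k M) : M →ₗ[k] (Fin a → M) :=
  LinearMap.pi fun s => T ^ (a - 1 - s : ℕ)

lemma evaluation_apply (T : Module.End k M) (g : Fin a → M) :
    evaluation a T g = ∑ n ∈ Finset.range a, (T ^ n) (coordinate k M a n g) := by
  simp [evaluation]

lemma coordinate_coevaluation (T : Module.End k M) (m : M) (hn : n < a) :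
    coordinate k M a n (coevaluation a T m) = (T ^ (a - 1 - n)) m :=
  coordinate_pi (fun n => (T ^ (a - 1 - n)) m) hn

lemma evaluation_surjective (ha : 0 < a) (T : Module.End k M) :
    Function.Surjective (evaluation a T) := by
  intro m
  refine ⟨fun s => if (s : ℕ) = 0 then m else 0, ?_⟩
  rw [evaluation_apply, Finset.sum_eq_single_of_mem 0 (Finset.mem_range.2 ha)]
  · rw [coordinate_pi (fun n => if n = 0 then m else 0) ha, if_pos rfl, pow_zero,
      Module.End.one_apply]
  · intro n hn h0
    rw [coordinate_pi (fun n => if n = 0 then m else 0) (Finset.mem_range.1 hn), if_neg h0,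
      map_zero]

lemma coevaluation_injective (ha : 0 < a) (T : Module.End k M) :
    Function.Injective (coevaluation a T) := by
  intro m m' h
  simpa [coordinate_coevaluation, ha] using congrArg (coordinate k M a (a - 1)) h

lemma evaluation_inducedFamily (hX : IsQuantumFamily a Q X) (i j : ι) (g : Fin a → M) :
    evaluation a (X i) (inducedFamily a Q X i 0 j g) = X j (evaluation a (X i) g) := by
  rw [evaluation_apply, evaluation_apply, map_sum]
  rcases eq_or_ne j i with rfl | hj
  · rw [inducedFamily_self]
    rcases a with - | b
    · simp
    rw [Finset.sum_range_succ', Finset.sum_range_succ (n := b), ← Module.End.mul_apply (X j),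
      ← pow_succ' (X j) b, hX.pow_eq_zero, coordinate_raising b.succ_pos, if_pos rfl, map_zero,
      LinearMap.zero_apply, add_zero, add_zero]
    refine Finset.sum_congr rfl fun n hn => ?_
    rw [coordinate_raising (by have := Finset.mem_range.1 hn; lia), if_neg n.succ_ne_zero,
      Nat.add_sub_cancel, pow_succ', Module.End.mul_apply]
  · refine Finset.sum_congr rfl fun n _ => ?_
    rw [inducedFamily_of_ne hj, twistedDiagonal, coordinate_diagonal, add_zero,
      ← Module.End.mul_apply, ← Module.End.mul_apply, mul_smul_comm,
      mul_pow_of_mul_eq_smul (hX.comm j i hj)]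

lemma coevaluation_inducedFamily (hQ : IsRootMatrix a Q) (hX : IsQuantumFamily a Q X) (i j : ι)
    (m : M) :
    coevaluation a (X i) (X j m) = inducedFamily a Q X i 1 j (coevaluation a (X i) m) := by
  refine tuple_ext k fun n hn => ?_
  rw [coordinate_coevaluation _ _ hn, ← Module.End.mul_apply]
  rcases eq_or_ne j i with rfl | hj
  · rw [inducedFamily_self, coordinate_raising hn, ← pow_succ]
    rcases n with - | n
    · rw [if_pos rfl, show a - 1 - 0 + 1 = a by lia, hX.pow_eq_zero, LinearMap.zero_apply]
    · rw [if_neg n.succ_ne_zero, coordinate_coevaluation _ _ (by lia)]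
      congr 2
      lia
  · rw [inducedFamily_of_ne hj, twistedDiagonal, coordinate_diagonal,
      coordinate_coevaluation _ _ hn, ← Module.End.mul_apply, smul_mul_assoc,
      mul_pow_of_mul_eq_smul (hX.comm j i hj), smul_smul, ← pow_add,
      show n + 1 + (a - 1 - n) = a by lia, hQ.pow_eq_one, one_smul]

end Induced

section Resolutions

universe u

variable {ι : Type*} {k : Type*} {M : Type u} [Field k] [AddCommGroup M] [Module k M] {a : ℕ}
  {Q : ι → ι → k} {X : ι → Module.End k M}

lemma exists_surjective_isLowering (hQ : IsRootMatrix a Q) (ha : 0 < a)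
    (hX : IsQuantumFamily a Q X) (s : Finset ι) :
    ∃ (E : Type u) (_ : AddCommGroup E) (_ : Module k E) (Z : ι → Module.End k E)
      (f : E →ₗ[k] M), IsQuantumFamily a Q Z ∧ (∀ i ∈ s, ∃ y, IsLowering a Q Z i y) ∧
        (∀ i v, f (Z i v) = X i (f v)) ∧ Function.Surjective f := by
  classical
  induction s using Finset.induction_on with
  | empty => exact ⟨M, _, _, X, .id, hX, by simp, fun _ _ => rfl, Function.surjective_id⟩
  | insert i s _ ih =>
    obtain ⟨E, _, _, Z, f, hZ, hlow, hf, hsurj⟩ := ih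
    refine ⟨Fin a → E, _, _, inducedFamily a Q Z i 0, f ∘ₗ evaluation a (Z i),
      isQuantumFamily_inducedFamily hQ hZ i 0, exists_isLowering_inducedFamily hQ hlow i 0,
      fun j v => ?_, hsurj.comp (evaluation_surjective ha (Z i))⟩
    rw [LinearMap.comp_apply, evaluation_inducedFamily hZ, hf, LinearMap.comp_apply]

lemma exists_injective_isLowering (hQ : IsRootMatrix a Q) (ha : 0 < a)
    (hX : IsQuantumFamily a Q X) (s : Finset ι) :
    ∃ (E : Type u) (_ : AddCommGroup E) (_ : Module k E) (Z : ι → Module.End k E)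
      (f : M →ₗ[k] E), IsQuantumFamily a Q Z ∧ (∀ i ∈ s, ∃ y, IsLowering a Q Z i y) ∧
        (∀ i v, f (X i v) = Z i (f v)) ∧ Function.Injective f := by
  classical
  induction s using Finset.induction_on with
  | empty => exact ⟨M, _, _, X, .id, hX, by simp, fun _ _ => rfl, Function.injective_id⟩
  | insert i s _ ih =>
    obtain ⟨E, _, _, Z, f, hZ, hlow, hf, hinj⟩ := ih
    refine ⟨Fin a → E, _, _, inducedFamily a Q Z i 1, coevaluation a (Z i) ∘ₗ f,
      isQuantumFamily_inducedFamily hQ hZ i 1, exists_isLowering_inducedFamily hQ hlow i 1,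
      fun j v => ?_, (coevaluation_injective ha (Z i)).comp hinj⟩
    rw [LinearMap.comp_apply, hf, coevaluation_inducedFamily hQ hZ, LinearMap.comp_apply]

end Resolutions

section Hom

variable {ι k M M' M'' N : Type*} [Field k] [AddCommGroup M] [Module k M] [AddCommGroup M']
  [Module k M'] [AddCommGroup M''] [Module k M''] [AddCommGroup N] [Module k N] {a : ℕ}
  {Q : ι → ι → k} {X : ι → Module.End k M} {Y : ι → Module.End k N} {i : ι} {y : Module.End k M}

/-- Operators on the target act on linear maps by postcomposition. -/
def postcomp (M N : Type*) [AddCommGroup M] [Module k M] [AddCommGroup N] [Module k N] :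
    Module.End k N →ₐ[k] Module.End k (M →ₗ[k] N) :=
  AlgHom.ofLinearMap (LinearMap.llcomp k M N N) rfl fun _ _ => rfl

/-- Operators on the source act on linear maps by precomposition, which reverses products. -/
def precomp (M N : Type*) [AddCommGroup M] [Module k M] [AddCommGroup N] [Module k N] :
    (Module.End k M)ᵐᵒᵖ →ₐ[k] Module.End k (M →ₗ[k] N) :=
  AlgHom.ofLinearMap
    ((LinearMap.llcomp k M M N).flip ∘ₗ (MulOpposite.opLinearEquiv k).symm.toLinearMap) rfl
    fun _ _ => rfl

lemma commute_postcomp_precomp (S : Module.End k N) (T : (Module.End k M)ᵐᵒᵖ) :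
    Commute (postcomp M N S) (precomp M N T) := rfl

lemma IsQuantumFamily.op {E : Type*} [Ring E] [Algebra k E] {x : ι → E}
    (hx : IsQuantumFamily a Q x) :
    IsQuantumFamily a (fun i j => Q j i) fun i => MulOpposite.op (x i) where
  comm i j hij := by
    rw [← MulOpposite.op_mul, hx.comm j i hij.symm, MulOpposite.op_smul, MulOpposite.op_mul]
  pow_eq_zero i := by rw [← MulOpposite.op_pow, hx.pow_eq_zero, MulOpposite.op_zero]

lemma IsShiftPair.op {E : Type*} [Ring E] {y p : E} (h : IsShiftPair a y p) :
    IsShiftPair a (MulOpposite.op y) (MulOpposite.op p) where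
  one_sub_mul_pow u hu := congrArg MulOpposite.op (h.pow_mul_one_sub u hu)
  pow_mul_one_sub u hu := congrArg MulOpposite.op (h.one_sub_mul_pow u hu)

lemma isQuantumBimodule_hom (hX : IsQuantumFamily a Q X) (hY : IsQuantumFamily a Q Y) :
    IsQuantumBimodule a Q (fun i => postcomp M N (Y i))
      fun i => precomp M N (MulOpposite.op (X i)) where
  left := hY.map (postcomp M N)
  right := hX.op.map (precomp M N)
  commute i j := commute_postcomp_precomp (Y i) (MulOpposite.op (X j))

lemma IsLowering.isContraction [LinearOrder ι] (h : IsLowering a Q X i y)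
    (hQ : IsRootMatrix a Q) :
    IsContraction a Q (fun i => postcomp M N (Y i)) (fun i => precomp M N (MulOpposite.op (X i))) i
      (precomp M N (MulOpposite.op y)) where
  hasWeight :=
    { mul_left := fun j _ => by
        rw [zpow_zero, one_smul, (commute_postcomp_precomp (Y j) (MulOpposite.op y)).eq]
      mul_right := fun j hj => by
        rw [← map_mul, ← map_mul, ← MulOpposite.op_mul, h.mul_eq_smul j hj, MulOpposite.op_smul,
          map_smul, MulOpposite.op_mul, zpow_neg_one, ← hQ.swap_eq_inv] }
  commute := commute_postcomp_precomp (Y i) (MulOpposite.op y)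
  isShiftPair := h.isShiftPair.op.map (precomp M N).toRingHom

end Hom

section Algebra

variable {ι k A M M' M'' N : Type*} [Field k] [Ring A] [Algebra k A]
  [AddCommGroup M] [Module k M] [Module A M] [IsScalarTower k A M]
  [AddCommGroup M'] [Module k M'] [Module A M'] [IsScalarTower k A M']
  [AddCommGroup M''] [Module k M''] [Module A M''] [IsScalarTower k A M'']
  [AddCommGroup N] [Module k N] [Module A N] [IsScalarTower k A N]
  {a n : ℕ} {Q : ι → ι → k} {x : ι → A}

/-- The operators by which a family of elements of an algebra acts on a module. -/
def actionFamily (k M : Type*) [Field k] [Algebra k A] [AddCommGroup M] [Module k M] [Module A M]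
    [IsScalarTower k A M] (x : ι → A) (i : ι) : Module.End k M :=
  Algebra.lsmul k k M (x i)

lemma isQuantumFamily_actionFamily (hx : IsQuantumFamily a Q x) :
    IsQuantumFamily a Q (actionFamily k M x) :=
  hx.map (Algebra.lsmul k k M)

/-- The left action on `Hom_k(M, N)` of a family of elements of the algebra. -/
def homLeft (k M N : Type*) [Field k] [Algebra k A] [AddCommGroup M] [Module k M]
    [AddCommGroup N] [Module k N] [Module A N] [IsScalarTower k A N] (x : ι → A) (i : ι) :
    Module.End k (M →ₗ[k] N) :=
  postcomp M N (actionFamily k N x i)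

/-- The right action on `Hom_k(M, N)` of a family of elements of the algebra. -/
def homRight (k M N : Type*) [Field k] [Algebra k A] [AddCommGroup M] [Module k M] [Module A M]
    [IsScalarTower k A M] [AddCommGroup N] [Module k N] (x : ι → A) (i : ι) :
    Module.End k (M →ₗ[k] N) :=
  precomp M N (MulOpposite.op (actionFamily k M x i))

lemma isQuantumBimodule_homLeft_homRight (hx : IsQuantumFamily a Q x) :
    IsQuantumBimodule a Q (homLeft k M N x) (homRight k M N x) :=
  isQuantumBimodule_hom (isQuantumFamily_actionFamily hx) (isQuantumFamily_actionFamily hx)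

lemma homLeft_eq_homRight_iff {f : M →ₗ[k] N} {i : ι} :
    homLeft k M N x i f = homRight k M N x i f ↔ ∀ m, f (x i • m) = x i • f m :=
  LinearMap.ext_iff.trans ⟨fun h m => (h m).symm, fun h m => (h m).symm⟩

lemma isBimoduleMap_lcomp (x : ι → A) (f : M →ₗ[A] M') :
    IsBimoduleMap (homLeft k M' N x) (homRight k M' N x) (homLeft k M N x) (homRight k M N x)
      (LinearMap.lcomp k N (f.restrictScalars k)) where
  map_left _ _ := rfl
  map_right i v := LinearMap.ext fun m => congrArg v (f.map_smul (x i) m).symm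

variable [LinearOrder ι] [Fintype ι]

/-- The differential of the complex computing `Ext_A(M, N)` for modules over a quantum complete
intersection `A` with generators `x`. -/
noncomputable def homDifferential (a : ℕ) (Q : ι → ι → k) (M N : Type*) [AddCommGroup M]
    [Module k M] [Module A M] [IsScalarTower k A M] [AddCommGroup N] [Module k N] [Module A N]
    [IsScalarTower k A N] (x : ι → A) : Module.End k (Cochain ι (M →ₗ[k] N)) :=
  quantumDifferential a Q (homLeft k M N x) (homRight k M N x)

lemma isShiftDifferential_homDifferential (hQ : IsRootMatrix a Q) (hx : IsQuantumFamily a Q x) :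
    IsShiftDifferential (homDifferential a Q M N x) :=
  isShiftDifferential_quantumDifferential hQ (isQuantumBimodule_homLeft_homRight hx)

lemma exactAt_homDifferential_of_isLowering (hQ : IsRootMatrix a Q) (hx : IsQuantumFamily a Q x)
    (ha : 0 < a) (h : ∀ i, ∃ y, IsLowering a Q (actionFamily k M x) i y) (n : ℕ) :
    ExactAt (homDifferential a Q M N x) n :=
  exactAt_of_forall_exists_isContraction hQ (isQuantumBimodule_homLeft_homRight hx) ha
    (fun i => (h i).imp' (fun y => precomp M N (MulOpposite.op y)) fun _ hy =>
      hy.isContraction hQ) n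

lemma mapCochain_homDifferential (f : M →ₗ[A] M') (φ : Cochain ι (M' →ₗ[k] N)) :
    mapCochain ι (LinearMap.lcomp k N (f.restrictScalars k)) (homDifferential a Q M' N x φ) =
      homDifferential a Q M N x (mapCochain ι (LinearMap.lcomp k N (f.restrictScalars k)) φ) :=
  (isBimoduleMap_lcomp x f).mapCochain_quantumDifferential φ

lemma ExactAt.of_section {f : M →ₗ[A] M'} {g : M' →ₗ[A] M} (hfg : g ∘ₗ f = .id)
    (h : ExactAt (homDifferential a Q M' N x) n) : ExactAt (homDifferential a Q M N x) n :=
  h.of_retract (mapCochain_homDifferential g) (mapCochain_homDifferential f) fun v =>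
    LinearMap.ext fun m => congrArg v (LinearMap.congr_fun hfg m)

lemma isShortExact_homDifferential {f : M →ₗ[A] M'} {g : M' →ₗ[A] M''}
    (hf : Function.Injective f) (hfg : Function.Exact f g) (hg : Function.Surjective g) :
    IsShortExact (homDifferential a Q M'' N x) (homDifferential a Q M' N x)
      (homDifferential a Q M N x) (LinearMap.lcomp k N (g.restrictScalars k))
      (LinearMap.lcomp k N (f.restrictScalars k)) where
  injective := LinearMap.lcomp_injective_of_surjective _ hg
  exact := LinearMap.exact_lcomp_of_exact_of_surjective N hfg hg
  surjective := fun h => by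
    obtain ⟨s, hs⟩ := (f.restrictScalars k).exists_leftInverse_of_injective
      (LinearMap.ker_eq_bot.2 hf)
    exact ⟨h ∘ₗ s, by rw [LinearMap.lcomp_apply', LinearMap.comp_assoc, hs, LinearMap.comp_id]⟩
  map_left := mapCochain_homDifferential g
  map_right := mapCochain_homDifferential f

end Algebra

section QuantumCompleteIntersection

universe u

variable {ι k : Type*} {A : Type u} [Field k] [Ring A] [Algebra k A] {a n : ℕ} {Q : ι → ι → k}
  {x : ι → A}

/-- The algebra `A` is the quantum complete intersection with generators `x`, exponent `a` and
commutation matrix `Q`: it is generated by the family `x` and universal for its relations. -/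
structure IsQuantumCompleteIntersection (a : ℕ) (Q : ι → ι → k) (x : ι → A) : Prop
    extends IsQuantumFamily a Q x where
  adjoin_range : Algebra.adjoin k (Set.range x) = ⊤
  exists_lift : ∀ {E : Type u} [Ring E] [Algebra k E] {X : ι → E}, IsQuantumFamily a Q X →
    ∃ f : A →ₐ[k] E, ∀ i, f (x i) = X i

section Finite

lemma exists_mul_eq_mul_of_mem_adjoin {y z : A} {q : k} (h : z * y = q • (y * z)) {b : A}
    (hb : b ∈ Algebra.adjoin k {y}) : ∃ b' ∈ Algebra.adjoin k {y}, z * b = b' * z := by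
  induction hb using Algebra.adjoin_induction with
  | mem b hb =>
    obtain rfl := Set.mem_singleton_iff.1 hb
    exact ⟨q • b, Subalgebra.smul_mem _ (Algebra.self_mem_adjoin_singleton k b) q,
      by rw [h, smul_mul_assoc]⟩
  | algebraMap r => exact ⟨_, Subalgebra.algebraMap_mem _ r, (Algebra.commutes r z).symm⟩
  | add b c _ _ hb hc =>
    obtain ⟨b', hb', hb⟩ := hb
    obtain ⟨c', hc', hc⟩ := hc
    exact ⟨b' + c', add_mem hb' hc', by rw [mul_add, hb, hc, add_mul]⟩
  | mul b c _ _ hb hc =>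
    obtain ⟨b', hb', hb⟩ := hb
    obtain ⟨c', hc', hc⟩ := hc
    exact ⟨b' * c', mul_mem hb' hc', by rw [← mul_assoc, hb, mul_assoc, hc, mul_assoc]⟩

lemma IsQuantumFamily.exists_fg_submodule (hx : IsQuantumFamily a Q x) (ha : 0 < a)
    (s : Finset ι) : ∃ P : Submodule k A, P.FG ∧ 1 ∈ P ∧ ∀ i ∈ s, ∀ p ∈ P, x i * p ∈ P := by
  classical
  induction s using Finset.induction_on with
  | empty =>
    exact ⟨Submodule.span k {1}, Submodule.fg_span_singleton 1,
      Submodule.mem_span_singleton_self 1, by simp⟩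
  | insert i s _ ih =>
    obtain ⟨P, hP, hone, hmul⟩ := ih
    have hint : IsIntegral k (x i) :=
      .of_pow ha (hx.pow_eq_zero i ▸ isIntegral_zero)
    refine ⟨(Algebra.adjoin k {x i}).toSubmodule * P, hint.fg_adjoin_singleton.mul hP,
      ?_, fun j hj w hw => ?_⟩
    · simpa using Submodule.mul_mem_mul (one_mem (Algebra.adjoin k {x i})) hone
    induction hw using Submodule.mul_induction_on' with
    | add w _ w' _ hw hw' => rw [mul_add]; exact add_mem hw hw'
    | mem_mul_mem b hb p hp =>
      rcases eq_or_ne j i with rfl | hji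
      · rw [← mul_assoc]
        exact Submodule.mul_mem_mul
          ((Algebra.adjoin k {x j}).mul_mem (Algebra.self_mem_adjoin_singleton k (x j)) hb) hp
      · obtain ⟨b', hb', hbb'⟩ := exists_mul_eq_mul_of_mem_adjoin (hx.comm j i hji) hb
        rw [← mul_assoc, hbb', mul_assoc]
        exact Submodule.mul_mem_mul hb' (hmul j (Finset.mem_of_mem_insert_of_ne hj hji) p hp)

lemma IsQuantumCompleteIntersection.finite [Finite ι] (hx : IsQuantumCompleteIntersection a Q x)
    (ha : 0 < a) : Module.Finite k A := by
  have := Fintype.ofFinite ι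
  obtain ⟨P, hP, hone, hmul⟩ := hx.exists_fg_submodule ha Finset.univ
  have hadjoin : ∀ b ∈ Algebra.adjoin k (Set.range x), ∀ p ∈ P, b * p ∈ P := by
    intro b hb
    induction hb using Algebra.adjoin_induction with
    | mem b hb =>
      obtain ⟨i, rfl⟩ := hb
      exact hmul i (Finset.mem_univ i)
    | algebraMap r => exact fun p hp => by rw [← Algebra.smul_def]; exact P.smul_mem r hp
    | add b c _ _ hb hc => exact fun p hp => by rw [add_mul]; exact add_mem (hb p hp) (hc p hp)
    | mul b c _ _ hb hc => exact fun p hp => by rw [mul_assoc]; exact hb _ (hc p hp)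
  have htop : P = ⊤ := eq_top_iff.2 fun b _ => by
    simpa using hadjoin b (hx.adjoin_range ▸ Algebra.mem_top) 1 hone
  exact ⟨htop ▸ hP⟩

end Finite

variable {M N P : Type u}
  [AddCommGroup M] [Module k M] [Module A M] [IsScalarTower k A M]
  [AddCommGroup N] [Module k N] [Module A N] [IsScalarTower k A N]
  [AddCommGroup P] [Module k P] [Module A P] [IsScalarTower k A P]

namespace IsQuantumCompleteIntersection

lemma exists_restrictScalars_eq (hx : IsQuantumCompleteIntersection a Q x) {f : M →ₗ[k] N}
    (h : ∀ i m, f (x i • m) = x i • f m) : ∃ g : M →ₗ[A] N, g.restrictScalars k = f := by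
  have hsmul : ∀ b ∈ Algebra.adjoin k (Set.range x), ∀ m, f (b • m) = b • f m := by
    intro b hb
    induction hb using Algebra.adjoin_induction with
    | mem b hb =>
      obtain ⟨i, rfl⟩ := hb
      exact h i
    | algebraMap r => simp
    | add b c _ _ hb hc => simp [add_smul, hb, hc]
    | mul b c _ _ hb hc => simp [mul_smul, hb, hc]
  exact ⟨{ f with map_smul' := fun b => hsmul b (hx.adjoin_range ▸ Algebra.mem_top) }, rfl⟩

lemma exists_module (hx : IsQuantumCompleteIntersection a Q x) {E : Type u} [AddCommGroup E]
    [Module k E] {Z : ι → Module.End k E} (hZ : IsQuantumFamily a Q Z) :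
    ∃ (_ : Module A E) (_ : IsScalarTower k A E), actionFamily k E x = Z := by
  obtain ⟨f, hf⟩ := hx.exists_lift hZ
  let _ : Module A E := Module.compHom E f.toRingHom
  have htower : IsScalarTower k A E :=
    ⟨fun r b v => LinearMap.congr_fun (map_smul f r b) v⟩
  exact ⟨inferInstance, htower, funext hf⟩

variable [Finite ι]

lemma exists_surjective_isLowering (hx : IsQuantumCompleteIntersection a Q x)
    (hQ : IsRootMatrix a Q) (ha : 0 < a) :
    ∃ (E : Type u) (_ : AddCommGroup E) (_ : Module k E) (_ : Module A E)
      (_ : IsScalarTower k A E) (f : E →ₗ[A] M),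
      Function.Surjective f ∧ ∀ i, ∃ y, IsLowering a Q (actionFamily k E x) i y := by
  have := Fintype.ofFinite ι
  obtain ⟨E, _, _, Z, f, hZ, hlow, hf, hsurj⟩ := QuantumCI.exists_surjective_isLowering hQ ha
    (isQuantumFamily_actionFamily (M := M) hx.toIsQuantumFamily) Finset.univ
  obtain ⟨_, _, rfl⟩ := hx.exists_module hZ
  obtain ⟨g, rfl⟩ := hx.exists_restrictScalars_eq hf
  exact ⟨E, _, _, _, ‹_›, g, hsurj, fun i => hlow i (Finset.mem_univ i)⟩

lemma exists_injective_isLowering (hx : IsQuantumCompleteIntersection a Q x)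
    (hQ : IsRootMatrix a Q) (ha : 0 < a) :
    ∃ (E : Type u) (_ : AddCommGroup E) (_ : Module k E) (_ : Module A E)
      (_ : IsScalarTower k A E) (f : M →ₗ[A] E),
      Function.Injective f ∧ ∀ i, ∃ y, IsLowering a Q (actionFamily k E x) i y := by
  have := Fintype.ofFinite ι
  obtain ⟨E, _, _, Z, f, hZ, hlow, hf, hinj⟩ := QuantumCI.exists_injective_isLowering hQ ha
    (isQuantumFamily_actionFamily (M := M) hx.toIsQuantumFamily) Finset.univ
  obtain ⟨_, _, rfl⟩ := hx.exists_module hZ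
  obtain ⟨g, rfl⟩ := hx.exists_restrictScalars_eq hf
  exact ⟨E, _, _, _, ‹_›, g, hinj, fun i => hlow i (Finset.mem_univ i)⟩

end IsQuantumCompleteIntersection

variable [LinearOrder ι] [Fintype ι]

namespace IsQuantumCompleteIntersection

lemma exactAt_of_projective (hx : IsQuantumCompleteIntersection a Q x) (hQ : IsRootMatrix a Q)
    (ha : 0 < a) [Module.Projective A P] (n : ℕ) : ExactAt (homDifferential a Q P N x) n := by
  obtain ⟨E, _, _, _, _, f, hf, hlow⟩ := hx.exists_surjective_isLowering (M := P) hQ ha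
  obtain ⟨g, hfg⟩ := Module.projective_lifting_property f .id hf
  exact (exactAt_homDifferential_of_isLowering hQ hx.toIsQuantumFamily ha hlow n).of_section hfg

lemma exactAt_of_eventually_of_card_le_add (hx : IsQuantumCompleteIntersection a Q x)
    (hQ : IsRootMatrix a Q) (ha : 0 < a) {M : Type u} [AddCommGroup M] [Module k M] [Module A M]
    [IsScalarTower k A M] {n₀ t : ℕ} (h : ∀ n ≥ n₀, ExactAt (homDifferential a Q M N x) n)
    (hn : Fintype.card ι ≤ n + t) : ExactAt (homDifferential a Q M N x) n := by
  induction t generalizing M n n₀ with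
  | zero =>
    exact (isShiftDifferential_homDifferential hQ hx.toIsQuantumFamily).exactAt_of_eventually h hn
  | succ t ih =>
    obtain ⟨E, _, _, _, _, f, hf, hlow⟩ := hx.exists_injective_isLowering (M := M) hQ ha
    have hshift : ∀ m, ExactAt (homDifferential a Q (E ⧸ LinearMap.range f) N x) (m + 1) ↔
        ExactAt (homDifferential a Q M N x) m := fun m =>
      (isShortExact_homDifferential hf (LinearMap.exact_map_mkQ_range f)
        (Submodule.mkQ_surjective _)).exactAt_succ_iff
          (isShiftDifferential_homDifferential hQ hx.toIsQuantumFamily)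
          (exactAt_homDifferential_of_isLowering hQ hx.toIsQuantumFamily ha hlow)
    refine (hshift n).1 (ih (n₀ := n₀ + 1) (fun m hm => ?_) (by lia))
    obtain ⟨m, rfl⟩ := Nat.exists_eq_add_of_le' (Nat.one_le_of_lt hm)
    exact (hshift m).2 (h m (by lia))

theorem exactAt_of_eventually (hx : IsQuantumCompleteIntersection a Q x) (hQ : IsRootMatrix a Q)
    (ha : 0 < a) {n₀ : ℕ} (h : ∀ n ≥ n₀, ExactAt (homDifferential a Q M N x) n) (n : ℕ) :
    ExactAt (homDifferential a Q M N x) n :=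
  hx.exactAt_of_eventually_of_card_le_add hQ ha h (Nat.le_add_left _ n)

lemma exactAt_ker_iff (hx : IsQuantumCompleteIntersection a Q x) (hQ : IsRootMatrix a Q)
    (ha : 0 < a) [Module.Projective A P] {ε : P →ₗ[A] M} (hε : Function.Surjective ε) :
    ExactAt (homDifferential a Q M N x) (n + 1) ↔
      ExactAt (homDifferential a Q (LinearMap.ker ε) N x) n :=
  (isShortExact_homDifferential Subtype.val_injective ε.exact_subtype_ker_map hε).exactAt_succ_iff
    (isShiftDifferential_homDifferential hQ hx.toIsQuantumFamily)
    (hx.exactAt_of_projective hQ ha)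

lemma exactAt_zero_iff (hx : IsQuantumCompleteIntersection a Q x) (hQ : IsRootMatrix a Q)
    (ha : 0 < a) [Module.Projective A P] {ε : P →ₗ[A] M} (hε : Function.Surjective ε) :
    ExactAt (homDifferential a Q M N x) 0 ↔
      ∀ f : LinearMap.ker ε →ₗ[A] N, ∃ g : P →ₗ[A] N, g ∘ₗ (LinearMap.ker ε).subtype = f := by
  rw [(isShortExact_homDifferential Subtype.val_injective ε.exact_subtype_ker_map
    hε).exactAt_iff_cocyclesLiftAt (isShiftDifferential_homDifferential hQ hx.toIsQuantumFamily)
    (hx.exactAt_of_projective hQ ha 0), cocyclesLiftAt_zero_iff]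
  simp only [homDifferential, homLeft_eq_homRight_iff, quantumDifferential_constCochain_eq_zero_iff
    hQ (isQuantumBimodule_homLeft_homRight hx.toIsQuantumFamily)]
  constructor
  · intro h f
    obtain ⟨g, hg, hgf⟩ := h (f.restrictScalars k) fun i => f.map_smul (x i)
    obtain ⟨g, rfl⟩ := hx.exists_restrictScalars_eq hg
    exact ⟨g, LinearMap.restrictScalars_injective k hgf⟩
  · intro h f hf
    obtain ⟨f, rfl⟩ := hx.exists_restrictScalars_eq hf
    obtain ⟨g, rfl⟩ := h f
    exact ⟨g.restrictScalars k, fun i => g.map_smul (x i), rfl⟩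

end IsQuantumCompleteIntersection

end QuantumCompleteIntersection

section Resolution

section LeftExact

variable {A K N P₀ P₁ P₂ : Type*} [Ring A] [AddCommGroup K] [Module A K] [AddCommGroup N]
  [Module A N] [AddCommGroup P₀] [Module A P₀] [AddCommGroup P₁] [Module A P₁] [AddCommGroup P₂]
  [Module A P₂] {d : P₂ →ₗ[A] P₁} {π : P₁ →ₗ[A] K}

lemma comp_eq_zero_iff_exists_comp_eq (hd : Function.Exact d π) (hπ : Function.Surjective π)
    (f : P₁ →ₗ[A] N) : f ∘ₗ d = 0 ↔ ∃ g : K →ₗ[A] N, g ∘ₗ π = f := by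
  constructor
  · intro hf
    refine ⟨(LinearMap.range d).liftQ f (LinearMap.range_le_ker_iff.2 hf) ∘ₗ
      (hd.linearEquivOfSurjective hπ).symm.toLinearMap, ?_⟩
    ext x
    simp
  · rintro ⟨g, rfl⟩
    rw [LinearMap.comp_assoc, hd.linearMap_comp_eq_zero, LinearMap.comp_zero]

lemma forall_exists_comp_eq_iff_exact (hd : Function.Exact d π) (hπ : Function.Surjective π)
    (j : K →ₗ[A] P₀) : (∀ f : K →ₗ[A] N, ∃ g : P₀ →ₗ[A] N, g ∘ₗ j = f) ↔
      Function.Exact (fun g : P₀ →ₗ[A] N => g ∘ₗ j ∘ₗ π) fun f : P₁ →ₗ[A] N => f ∘ₗ d := by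
  have hker := comp_eq_zero_iff_exists_comp_eq (N := N) hd hπ
  constructor
  · refine fun h f => (hker f).trans ⟨?_, ?_⟩
    · rintro ⟨f, rfl⟩
      obtain ⟨g, rfl⟩ := h f
      exact ⟨g, rfl⟩
    · rintro ⟨g, rfl⟩
      exact ⟨g ∘ₗ j, rfl⟩
  · intro h f
    obtain ⟨g, hg⟩ := (h (f ∘ₗ π)).1 ((hker _).2 ⟨f, rfl⟩)
    exact ⟨g, (LinearMap.cancel_right hπ).1 hg⟩

lemma exists_surjective_subtype_comp_eq {ε : P₀ →ₗ[A] N} {d : P₁ →ₗ[A] P₀}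
    (hd : Function.Exact d ε) : ∃ π : P₁ →ₗ[A] LinearMap.ker ε,
      Function.Surjective π ∧ (LinearMap.ker ε).subtype ∘ₗ π = d :=
  ⟨d.codRestrict _ hd.apply_apply_eq_zero, fun m => ((hd m).1 m.2).imp fun _ => Subtype.ext, rfl⟩

end LeftExact

universe u

variable {ι k : Type*} {A : Type u} [LinearOrder ι] [Fintype ι] [Field k] [Ring A] [Algebra k A]
  {a : ℕ} {Q : ι → ι → k} {x : ι → A}

theorem IsQuantumCompleteIntersection.exactAt_iff_exact_comp
    (hx : IsQuantumCompleteIntersection a Q x) (hQ : IsRootMatrix a Q) (ha : 0 < a)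
    {M N : Type u} [AddCommGroup M] [Module k M] [Module A M] [IsScalarTower k A M]
    [AddCommGroup N] [Module k N] [Module A N] [IsScalarTower k A N]
    {P : ℕ → Type u} [∀ n, AddCommGroup (P n)] [∀ n, Module k (P n)] [∀ n, Module A (P n)]
    [∀ n, IsScalarTower k A (P n)] [∀ n, Module.Projective A (P n)]
    {d : ∀ n, P (n + 1) →ₗ[A] P n} {ε : P 0 →ₗ[A] M} (hε : Function.Surjective ε)
    (h₀ : Function.Exact (d 0) ε) (hd : ∀ n, Function.Exact (d (n + 1)) (d n)) (n : ℕ) :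
    ExactAt (homDifferential a Q M N x) n ↔
      Function.Exact (fun g : P n →ₗ[A] N => g ∘ₗ d n)
        fun f : P (n + 1) →ₗ[A] N => f ∘ₗ d (n + 1) := by
  induction n generalizing M P with
  | zero =>
    obtain ⟨π, hπ, hπd⟩ := exists_surjective_subtype_comp_eq h₀
    have hdπ : Function.Exact (d 1) π :=
      (Submodule.subtype_injective _).comp_exact_iff_exact.1 (hπd ▸ hd 0)
    rw [hx.exactAt_zero_iff hQ ha hε, forall_exists_comp_eq_iff_exact hdπ hπ, hπd]
  | succ n ih =>
    obtain ⟨π, hπ, hπd⟩ := exists_surjective_subtype_comp_eq h₀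
    have hdπ : Function.Exact (d 1) π :=
      (Submodule.subtype_injective _).comp_exact_iff_exact.1 (hπd ▸ hd 0)
    rw [hx.exactAt_ker_iff hQ ha hε]
    exact ih (P := fun n => P (n + 1)) (d := fun n => d (n + 1)) hπ hdπ fun n => hd (n + 1)

end Resolution

section Ext

open scoped ModuleCat.Algebra

universe u v

lemma shortComplex_exact_iff_function_exact {A : Type u} [Ring A]
    {S : ShortComplex (ModuleCat.{v} A)} : S.Exact ↔ Function.Exact S.f.hom S.g.hom := by
  rw [ShortComplex.moduleCat_exact_iff_range_eq_ker, LinearMap.exact_iff, eq_comm]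

variable {k : Type*} {A : Type u} [Field k] [Ring A] [Algebra k A] {M : ModuleCat.{u} A}

lemma subsingleton_ext_succ_iff_exact_comp (P : ProjectiveResolution M) (N : ModuleCat.{u} A)
    (n : ℕ) : Subsingleton (((_root_.Ext k (ModuleCat A) (n + 1)).obj (Opposite.op M)).obj N) ↔
      Function.Exact (fun g : P.complex.X n →ₗ[A] N => g ∘ₗ (P.complex.d (n + 1) n).hom)
        fun f : P.complex.X (n + 1) →ₗ[A] N => f ∘ₗ (P.complex.d (n + 2) (n + 1)).hom := by
  rw [← ModuleCat.isZero_iff_subsingleton, (P.isoExt (n + 1) N).isZero_iff,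
    ← HomologicalComplex.exactAt_iff_isZero_homology,
    HomologicalComplex.exactAt_iff' _ n (n + 1) (n + 2) (by simp) (by simp),
    shortComplex_exact_iff_function_exact]
  refine ModuleCat.homEquiv.forall_congr fun f => iff_congr ModuleCat.hom_ext_iff ?_
  exact ModuleCat.homEquiv.exists_congr fun g => ModuleCat.hom_ext_iff

variable {ι : Type*} [LinearOrder ι] [Fintype ι] {a : ℕ} {Q : ι → ι → k} {x : ι → A}

theorem IsQuantumCompleteIntersection.subsingleton_ext_succ_iff_exactAt
    (hx : IsQuantumCompleteIntersection a Q x) (hQ : IsRootMatrix a Q) (ha : 0 < a)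
    (M N : ModuleCat.{u} A) (n : ℕ) :
    Subsingleton (((_root_.Ext k (ModuleCat A) (n + 1)).obj (Opposite.op M)).obj N) ↔
      ExactAt (homDifferential a Q M N x) n := by
  let P := projectiveResolution M
  let ε : P.complex.X 0 ⟶ M := P.π.f 0
  have hprojective : ∀ m, Module.Projective A (P.complex.X m) := fun m =>
    (IsProjective.iff_projective _).2 (P.projective m)
  have hε : Function.Surjective ε.hom :=
    (ModuleCat.epi_iff_surjective _).1 (inferInstanceAs (Epi (P.π.f 0)))
  rw [subsingleton_ext_succ_iff_exact_comp P N n,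
    hx.exactAt_iff_exact_comp hQ ha (P := fun m => P.complex.X m)
      (d := fun m => (P.complex.d (m + 1) m).hom) hε
      (shortComplex_exact_iff_function_exact.1 P.exact₀)
      fun m => shortComplex_exact_iff_function_exact.1 (P.exact_succ m)]

end Ext

section Parity

variable {p : ℕ → Prop} {n₀ : ℕ}

lemma forall_add_two_mul (h : ∀ n ≥ n₀, p n → p (n + 2)) {n : ℕ} (hn : n₀ ≤ n) (hpn : p n)
    (t : ℕ) : p (n + 2 * t) := by
  induction t with
  | zero => exact hpn
  | succ t ih => exact h _ (by lia) ih

lemma eventually_or_eventually_not_of_parity (h : ∀ n ≥ n₀, p n → p (n + 2)) :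
    (∃ m, ∀ n ≥ m, p n) ∨
      ∃ m, (∀ n ≥ m, Even n → ¬p n) ∨ (∀ n ≥ m, Odd n → ¬p n) := by
  by_contra! ⟨hp, hnot⟩
  obtain ⟨⟨i, hi, hieven, hpi⟩, ⟨j, hj, hjodd, hpj⟩⟩ := hnot n₀
  obtain ⟨n, hn, hpn⟩ := hp (i + j)
  apply hpn
  rcases Nat.even_or_odd n with hneven | hnodd
  · obtain ⟨t, ht⟩ := (Nat.even_sub (by lia : i ≤ n)).2 (iff_of_true hneven hieven)
    rw [show n = i + 2 * t by lia]
    exact forall_add_two_mul h hi hpi t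
  · obtain ⟨t, ht⟩ := Nat.Odd.sub_odd hnodd hjodd
    rw [show n = j + 2 * t by lia]
    exact forall_add_two_mul h hj hpj t

end Parity

section QCI

variable {k : Type} [Field k] {c a : ℕ} {q : k}

/-- The matrix `Q` with `x i * x j = Q i j • (x j * x i)` for the generators of `QCI k c a q`. -/
def commutationMatrix (c : ℕ) (q : k) (i j : Fin c) : k :=
  if i < j then q else if j < i then q⁻¹ else 1

/-- The images in `QCI k c a q` of the free generators. -/
def generator (k : Type) [Field k] (c a : ℕ) (q : k) (i : Fin c) : QCI k c a q :=
  RingQuot.mkAlgHom k (QCIRel k c a q) (FreeAlgebra.ι k i)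

lemma isRootMatrix_commutationMatrix (hq : q ≠ 0) (hqa : q ^ a = 1) :
    IsRootMatrix a (commutationMatrix c q) where
  mul_swap i j := by
    rcases lt_trichotomy i j with h | rfl | h
    · simp [commutationMatrix, h, h.not_gt, hq]
    · simp [commutationMatrix]
    · simp [commutationMatrix, h, h.not_gt, hq]
  pow_eq_one i j := by
    unfold commutationMatrix
    split_ifs <;> simp [hqa]

lemma isQuantumFamily_generator (hq : q ≠ 0) :
    IsQuantumFamily a (commutationMatrix c q) (generator k c a q) where
  comm i j hij := by
    have hcomm : ∀ i j : Fin c, i < j → generator k c a q i * generator k c a q j =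
        q • (generator k c a q j * generator k c a q i) := fun i j hij => by
      simpa [generator, sub_eq_zero] using
        RingQuot.mkAlgHom_rel k (QCIRel.comm (a := a) (q := q) i j hij)
    rcases hij.lt_or_gt with h | h
    · simpa [commutationMatrix, h] using hcomm i j h
    · simp [commutationMatrix, h, h.not_gt, hcomm j i h, smul_smul, hq]
  pow_eq_zero i := by
    simpa [generator] using RingQuot.mkAlgHom_rel k (QCIRel.pow (a := a) (q := q) i)

lemma isQuantumCompleteIntersection_generator (hq : q ≠ 0) :
    IsQuantumCompleteIntersection a (commutationMatrix c q) (generator k c a q) where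
  toIsQuantumFamily := isQuantumFamily_generator hq
  adjoin_range := by
    rw [show Set.range (generator k c a q) =
      RingQuot.mkAlgHom k (QCIRel k c a q) '' Set.range (FreeAlgebra.ι k) from Set.range_comp _ _,
      ← AlgHom.map_adjoin, FreeAlgebra.adjoin_range_ι, Algebra.map_top,
      AlgHom.range_eq_top]
    exact RingQuot.mkAlgHom_surjective k _
  exists_lift {E _ _ X} hX := by
    have hrel : ∀ ⦃y z⦄, QCIRel k c a q y z → FreeAlgebra.lift k X y = FreeAlgebra.lift k X z := by
      rintro _ _ (i | ⟨i, j, hij⟩)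
      · simp [hX.pow_eq_zero]
      · simp [hX.comm i j hij.ne, commutationMatrix, hij]
    exact ⟨RingQuot.liftAlgHom k ⟨FreeAlgebra.lift k X, hrel⟩, fun i => by simp [generator]⟩

end QCI

end QuantumCI

section General

open QuantumCI
open scoped ModuleCat.Algebra

universe u

theorem stmt_11_general {ι k : Type*} {A : Type u} [Finite ι] [Field k] [Ring A] [Algebra k A]
    {a : ℕ} {Q : ι → ι → k} {x : ι → A} (hQ : IsRootMatrix a Q) (ha : 0 < a)
    (hx : IsQuantumCompleteIntersection a Q x) (M N : ModuleCat.{u} A) [Module.Finite A M]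
    [Module.Finite A N] :
    (∀ n : ℕ, 0 < n → Subsingleton
      (((_root_.Ext k (ModuleCat A) n).obj (Opposite.op M)).obj N)) ∨
    ∃ m₀ : ℕ,
      (∀ n ≥ m₀, Even n → Nontrivial
        (((_root_.Ext k (ModuleCat A) n).obj (Opposite.op M)).obj N)) ∨
      (∀ n ≥ m₀, Odd n → Nontrivial
        (((_root_.Ext k (ModuleCat A) n).obj (Opposite.op M)).obj N)) := by
  classical
  have := Fintype.ofFinite ι
  let _ : LinearOrder ι := linearOrderOfSTO WellOrderingRel
  have := hx.finite ha
  have : Module.Finite k M := .trans A M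
  have : Module.Finite k N := .trans A N
  have hext := hx.subsingleton_ext_succ_iff_exactAt hQ ha M N
  obtain ⟨n₀, hstep⟩ := (isShiftDifferential_homDifferential (M := M) (N := N) hQ
    hx.toIsQuantumFamily).exists_exactAt_add_two
  simp only [← not_subsingleton_iff_nontrivial]
  refine (eventually_or_eventually_not_of_parity (n₀ := n₀ + 1) fun n hn => ?_).imp_left ?_
  · obtain ⟨n, rfl⟩ := Nat.exists_eq_add_of_le' (Nat.one_le_of_lt hn)
    rw [hext, add_right_comm, hext]
    exact hstep n (by lia)
  · rintro ⟨m, hm⟩ n hn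
    obtain ⟨n, rfl⟩ := Nat.exists_eq_add_of_le' hn
    exact (hext n).2 (hx.exactAt_of_eventually hQ ha (n₀ := m)
      (fun n hn => (hext n).1 (hm (n + 1) (by lia))) n)

end General

/-- Let `k` be a field, `c ≥ 1`, `a ≥ 2`, and `q ∈ k` nonzero with
`q ^ a = 1`.  Let `A = A_{c,q}^a` be the corresponding quantum complete intersection.
Then for finitely generated left `A`-modules `M, N`, either `Ext_A^n(M,N) = 0` for all
`n > 0`, or there is a non-negative integer `m₀` such that `Ext_A^n(M,N) ≠ 0` for all
even `n ≥ m₀`, or for all odd `n ≥ m₀`. -/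
theorem stmt_11 (k : Type) [Field k] (c a : ℕ) (hc : 1 ≤ c) (ha : 2 ≤ a)
    (q : k) (hq0 : q ≠ 0) (hqa : q ^ a = 1)
    (M N : Type) [AddCommGroup M] [Module (QCI k c a q) M] [Module.Finite (QCI k c a q) M]
    [AddCommGroup N] [Module (QCI k c a q) N] [Module.Finite (QCI k c a q) N] :
    (∀ n : ℕ, 0 < n → Subsingleton
      (((_root_.Ext k (ModuleCat (QCI k c a q)) n).obj
        (Opposite.op (ModuleCat.of (QCI k c a q) M))).obj (ModuleCat.of (QCI k c a q) N))) ∨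
    ∃ m₀ : ℕ,
      (∀ n ≥ m₀, Even n → Nontrivial
        (((_root_.Ext k (ModuleCat (QCI k c a q)) n).obj
          (Opposite.op (ModuleCat.of (QCI k c a q) M))).obj (ModuleCat.of (QCI k c a q) N))) ∨
      (∀ n ≥ m₀, Odd n → Nontrivial
        (((_root_.Ext k (ModuleCat (QCI k c a q)) n).obj
          (Opposite.op (ModuleCat.of (QCI k c a q) M))).obj (ModuleCat.of (QCI k c a q) N))) := by
  exact stmt_11_general (QuantumCI.isRootMatrix_commutationMatrix hq0 hqa) (by lia)
    (QuantumCI.isQuantumCompleteIntersection_generator hq0) (.of _ M) (.of _ N)
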